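/- arXiv:2403.00120 — 5 statements merged into one kernel-verified Lean document; each statement's English description precedes it below -/
import Mathlib

section
/- Let q be a prime power and n ≥ 2, k ≥ 0 integers. The number N_{F^n}(k) of one-dimensional F-subspaces of F^n of height k, where F = F_q(X), equals q^{nk-n+1}(q^n-1)(q^{n-1}-1)/(q-1) if k ≥ 1, and (q^n-1)/(q-1) if k = 0. -/
open Polynomial

/-!
A line in `F(X)^n` is spanned by a primitive tuple of polynomials, unique up to `F[X]ˣ = Fˣ`, so it
suffices to count the primitive tuples of height `k`, say `P k` of them. The number of all tuples
of height `k` is `T k = q ^ (n * k) * (q ^ n - 1)`, and dividing such a tuple by its monic gcd gives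
`T k = ∑_{i + j = k} q ^ i * P j`. Hence `P 0 = T 0` and `P (k + 1) = T (k + 1) - q * T k`.
-/

section PrimitiveTuple

variable {ι R : Type*}

/-- Coprimality of the entries of a tuple, as a whole and not pairwise: the only common divisors
are the units. It singles out the integral spanning vectors of a line that are unique up to
units. -/
def IsPrimitiveTuple [Monoid R] (v : ι → R) : Prop :=
  ∀ d : R, (∀ i, d ∣ v i) → IsUnit d

namespace IsPrimitiveTuple

theorem ne_zero [MonoidWithZero R] [Nontrivial R] {v : ι → R} (hv : IsPrimitiveTuple v) :
    v ≠ 0 := by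
  rintro rfl
  exact not_isUnit_zero (hv 0 fun _ => dvd_rfl)

theorem units_smul [CommMonoid R] {v : ι → R} (hv : IsPrimitiveTuple v) (u : Rˣ) :
    IsPrimitiveTuple (u • v) :=
  fun d hd => hv d fun i => u.dvd_mul_left.1 (hd i)

variable [Finite ι]

theorem dvd_of_forall_dvd_mul [CommMonoidWithZero R] [IsGCDMonoid R] {v : ι → R}
    (hv : IsPrimitiveTuple v) {a b : R} (h : ∀ i, a ∣ b * v i) : a ∣ b := by
  cases nonempty_fintype ι
  obtain ⟨_⟩ : Nonempty (NormalizedGCDMonoid R) := inferInstance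
  have hunit : IsUnit (Finset.univ.gcd v) := hv _ fun i => Finset.gcd_dvd (Finset.mem_univ i)
  have hdvd : a ∣ b * Finset.univ.gcd v :=
    (Finset.dvd_gcd fun i _ => h i).trans (Finset.gcd_mul_left' _ v b).dvd
  exact hunit.dvd_mul_right.1 hdvd

theorem associated_of_smul_eq_smul [CommMonoidWithZero R] [IsGCDMonoid R] {v w : ι → R}
    (hv : IsPrimitiveTuple v) (hw : IsPrimitiveTuple w) {a b : R} (h : a • v = b • w) :
    Associated a b :=
  have := IsGCDMonoid.isCancelMulZero (α := R)
  associated_of_dvd_dvd (hw.dvd_of_forall_dvd_mul fun i => ⟨v i, (congrFun h i).symm⟩)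
    (hv.dvd_of_forall_dvd_mul fun i => ⟨w i, congrFun h i⟩)

end IsPrimitiveTuple

theorem exists_smul_isPrimitiveTuple [Finite ι] [Nonempty ι] [CommMonoidWithZero R]
    [IsGCDMonoid R] (v : ι → R) : ∃ (d : R) (w : ι → R), IsPrimitiveTuple w ∧ d • w = v := by
  cases nonempty_fintype ι
  obtain ⟨_⟩ : Nonempty (NormalizedGCDMonoid R) := inferInstance
  obtain ⟨w, hvw, hw⟩ := Finset.univ.extract_gcd v Finset.univ_nonempty
  refine ⟨Finset.univ.gcd v, w, fun d hd => ?_, funext fun i => (hvw i (Finset.mem_univ i)).symm⟩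
  exact isUnit_of_dvd_one (hw ▸ Finset.dvd_gcd fun i _ => hd i)

end PrimitiveTuple

section Span

variable {ι R : Type*} (K : Type*) [CommRing R] [Field K] [Algebra R K]

theorem span_algebraMap_units_smul (u : Rˣ) (v : ι → R) :
    Submodule.span K {fun i => algebraMap R K ((u • v) i)} =
      Submodule.span K {fun i => algebraMap R K (v i)} := by
  refine (Submodule.span_singleton_eq_span_singleton.2
    ⟨Units.map (algebraMap R K : R →* K) u, ?_⟩).symm
  ext i
  simp [Units.smul_def]

variable [Finite ι] [IsDomain R] [IsGCDMonoid R] [IsFractionRing R K]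

theorem IsPrimitiveTuple.exists_units_smul_eq_of_span_eq {v w : ι → R} (hv : IsPrimitiveTuple v)
    (hw : IsPrimitiveTuple w)
    (h : Submodule.span K {fun i => algebraMap R K (v i)} =
      Submodule.span K {fun i => algebraMap R K (w i)}) :
    ∃ u : Rˣ, u • v = w := by
  obtain ⟨z, hz⟩ := Submodule.span_singleton_eq_span_singleton.1 h
  obtain ⟨a, b, hb, hab⟩ := IsFractionRing.div_surjective (A := R) (z : K)
  have hb₀ : b ≠ 0 := nonZeroDivisors.ne_zero hb
  have hb₀' : algebraMap R K b ≠ 0 := by simpa using hb₀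
  have hvw : a • v = b • w := by
    ext1 i
    have hzi : (z : K) * algebraMap R K (v i) = algebraMap R K (w i) := congrFun hz i
    apply IsFractionRing.injective R K
    simp only [Pi.smul_apply, smul_eq_mul, map_mul, ← hzi, ← hab]
    field_simp
  obtain ⟨u, rfl⟩ := (hv.associated_of_smul_eq_smul hw hvw).symm
  exact ⟨u, smul_right_injective _ hb₀ (by simpa [Units.smul_def, mul_smul] using hvw)⟩

theorem card_span_isPrimitiveTuple_mul_card_units {p : (ι → R) → Prop}
    (hp : ∀ (u : Rˣ) (v : ι → R), p v → p (u • v)) :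
    Nat.card {W : Submodule K (ι → K) // ∃ v : ι → R, IsPrimitiveTuple v ∧ p v ∧
      W = Submodule.span K {fun i => algebraMap R K (v i)}} * Nat.card Rˣ =
    Nat.card {v : ι → R // IsPrimitiveTuple v ∧ p v} := by
  rw [← Nat.card_prod]
  choose rep hrep hp_rep hspan using fun W : {W : Submodule K (ι → K) //
    ∃ v : ι → R, IsPrimitiveTuple v ∧ p v ∧
      W = Submodule.span K {fun i => algebraMap R K (v i)}} => W.2
  refine Nat.card_eq_of_bijective
    (fun x => ⟨x.2 • rep x.1, (hrep x.1).units_smul x.2, hp x.2 _ (hp_rep x.1)⟩) ⟨?_, ?_⟩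
  · rintro ⟨W, u⟩ ⟨W', u'⟩ h
    have heq : u • rep W = u' • rep W' := congrArg Subtype.val h
    obtain rfl : W = W' := Subtype.ext <| by
      rw [hspan W, hspan W', ← span_algebraMap_units_smul K u, heq, span_algebraMap_units_smul]
    have hu : u = u' := Units.ext (smul_left_injective R (hrep W).ne_zero heq)
    rw [hu]
  · rintro ⟨v, hv, hpv⟩
    obtain ⟨u, hu⟩ := (hrep ⟨_, v, hv, hpv, rfl⟩).exists_units_smul_eq_of_span_eq K hv
      (hspan ⟨_, v, hv, hpv, rfl⟩).symm
    exact ⟨(_, u), Subtype.ext hu⟩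

end Span

section Polynomial

theorem card_units_polynomial (R : Type*) [Semiring R] [NoZeroDivisors R] :
    Nat.card R[X]ˣ = Nat.card Rˣ := by
  refine (Nat.card_eq_of_bijective (Units.map (C : R →+* R[X]).toMonoidHom)
    ⟨Units.map_injective C_injective, fun p => ?_⟩).symm
  obtain ⟨c, hc, hcp⟩ := Polynomial.isUnit_iff.1 p.isUnit
  exact ⟨hc.unit, Units.ext hcp⟩

theorem card_degreeLT (R : Type*) [Semiring R] (k : ℕ) :
    Nat.card (degreeLT R k) = Nat.card R ^ k := by
  rw [Nat.card_congr (degreeLTEquiv R k).toEquiv, Nat.card_fun, Nat.card_fin]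

theorem card_monic_natDegree_eq (R : Type*) [Ring R] [Nontrivial R] (k : ℕ) :
    Nat.card {p : R[X] // p.Monic ∧ p.natDegree = k} = Nat.card R ^ k := by
  rw [Nat.card_congr (monicEquivDegreeLT k), card_degreeLT]

variable {ι F : Type*} [Finite ι] [Field F]

theorem exists_monic_smul_isPrimitiveTuple {v : ι → F[X]} (hv : v ≠ 0) :
    ∃ (d : F[X]) (w : ι → F[X]), d.Monic ∧ IsPrimitiveTuple w ∧ d • w = v := by
  classical
  have : Nonempty ι := (Function.ne_iff.1 hv).nonempty
  obtain ⟨d, w, hw, rfl⟩ := exists_smul_isPrimitiveTuple v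
  have hd : d ≠ 0 := left_ne_zero_of_smul hv
  obtain ⟨u, hu⟩ := normalize_associated d
  refine ⟨normalize d, u • w, monic_normalize hd, hw.units_smul u, ?_⟩
  rw [Units.smul_def, smul_smul, hu]

theorem IsPrimitiveTuple.monic_smul_inj {v w : ι → F[X]} (hv : IsPrimitiveTuple v)
    (hw : IsPrimitiveTuple w) {a b : F[X]} (ha : a.Monic) (hb : b.Monic) (h : a • v = b • w) :
    a = b ∧ v = w := by
  obtain rfl : a = b := eq_of_monic_of_associated ha hb (hv.associated_of_smul_eq_smul hw h)
  exact ⟨rfl, smul_right_injective _ ha.ne_zero h⟩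

end Polynomial

section TupleHeight

variable {ι R : Type*} [Fintype ι] [Semiring R]

/-- The maximal degree of the entries of a tuple of polynomials, `⊥` for the zero tuple. On
primitive tuples it is the height of the line they span. -/
def tupleHeight (v : ι → R[X]) : WithBot ℕ :=
  Finset.univ.sup fun i => (v i).degree

theorem tupleHeight_smul [NoZeroDivisors R] (p : R[X]) (v : ι → R[X]) :
    tupleHeight (p • v) = p.degree + tupleHeight v := by
  simp only [tupleHeight, Pi.smul_apply, smul_eq_mul, degree_mul]
  exact (Finset.apply_sup_eq_sup_comp_of_linearOrder (p.degree + ·)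
    (fun _ _ h => add_le_add_right h _) (WithBot.add_bot _)).symm

theorem ne_zero_of_tupleHeight_eq_coe {v : ι → R[X]} {k : ℕ}
    (h : tupleHeight v = k) : v ≠ 0 := by
  rintro rfl
  simp [tupleHeight] at h

variable (ι R)

theorem card_tupleHeight_lt (k : ℕ) :
    Nat.card {v : ι → R[X] // tupleHeight v < k} = Nat.card R ^ (Fintype.card ι * k) := by
  have e : {v : ι → R[X] // tupleHeight v < k} ≃ (ι → degreeLT R k) :=
    (Equiv.subtypeEquivRight fun v => by simp [tupleHeight, mem_degreeLT]).trans
      (Equiv.subtypePiEquivPi (p := fun _ a => a ∈ degreeLT R k))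
  rw [Nat.card_congr e, Nat.card_fun, card_degreeLT, Nat.card_eq_fintype_card (α := ι), pow_mul']

variable [Finite R]

theorem finite_tupleHeight_lt (k : ℕ) :
    {v : ι → R[X] | tupleHeight v < k}.Finite :=
  Nat.finite_of_card_ne_zero <|
    (card_tupleHeight_lt ι R k).trans_ne (pow_ne_zero _ Nat.card_pos.ne')

theorem card_tupleHeight_eq (k : ℕ) :
    Nat.card {v : ι → R[X] // tupleHeight v = k} =
      Nat.card R ^ (Fintype.card ι * k) * (Nat.card R ^ Fintype.card ι - 1) := by
  have hsdiff : {v : ι → R[X] | tupleHeight v = k} =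
      {v | tupleHeight v < (k + 1 : ℕ)} \ {v | tupleHeight v < k} := by
    ext v
    simp only [Set.mem_ofPred_eq, Set.mem_sdiff, not_lt, le_antisymm_iff]
    exact and_congr_left' Order.lt_succ_iff.symm
  have hsub : {v : ι → R[X] | tupleHeight v < k} ⊆ {v | tupleHeight v < (k + 1 : ℕ)} :=
    fun v (hv : tupleHeight v < k) => hv.trans (WithBot.coe_lt_coe.2 k.lt_succ_self)
  calc Nat.card {v : ι → R[X] // tupleHeight v = k}
    _ = Nat.card R ^ (Fintype.card ι * (k + 1)) - Nat.card R ^ (Fintype.card ι * k) := by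
      rw [← card_tupleHeight_lt, ← card_tupleHeight_lt]
      exact (congrArg Set.ncard hsdiff).trans (Set.ncard_sdiff hsub (finite_tupleHeight_lt ι R k))
    _ = _ := by rw [Nat.mul_sub, ← pow_add, mul_add_one, mul_one]

theorem finite_tupleHeight_eq (k : ℕ) :
    {v : ι → R[X] | tupleHeight v = k}.Finite :=
  (finite_tupleHeight_lt ι R (k + 1)).subset fun v (hv : tupleHeight v = k) =>
    hv.trans_lt (WithBot.coe_lt_coe.2 k.lt_succ_self)

end TupleHeight

section PrimitiveCount

open Finset.HasAntidiagonal (antidiagonal mem_antidiagonal)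

variable (ι F : Type*) [Fintype ι] [Field F]

theorem card_tupleHeight_eq_card_sigma (k : ℕ) :
    Nat.card {v : ι → F[X] // tupleHeight v = k} =
      Nat.card (Σ ij : antidiagonal k, {p : F[X] // p.Monic ∧ p.natDegree = ij.1.1} ×
        {v : ι → F[X] // IsPrimitiveTuple v ∧ tupleHeight v = ij.1.2}) := by
  refine (Nat.card_eq_of_bijective (fun x => ⟨x.2.1.1 • x.2.2.1, ?mem⟩) ⟨?inj, ?surj⟩).symm
  case mem =>
    obtain ⟨⟨⟨i, j⟩, hij⟩, ⟨p, hp, hpi⟩, ⟨v, -, hvj⟩⟩ := x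
    change tupleHeight (p • v) = k
    rw [tupleHeight_smul, degree_eq_natDegree hp.ne_zero, hpi, hvj, ← Nat.cast_add,
      mem_antidiagonal.1 hij]
  case inj =>
    rintro ⟨⟨⟨i, j⟩, hij⟩, ⟨p, hp, hpi⟩, ⟨v, hv, hvj⟩⟩
      ⟨⟨⟨i', j'⟩, hij'⟩, ⟨p', hp', hpi'⟩, ⟨v', hv', hvj'⟩⟩ h
    obtain ⟨rfl, rfl⟩ := hv.monic_smul_inj hv' hp hp' (congrArg Subtype.val h)
    obtain rfl : i = i' := hpi.symm.trans hpi'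
    obtain rfl : j = j' := WithBot.coe_injective (hvj.symm.trans hvj')
    rfl
  case surj =>
    rintro ⟨v, hv⟩
    obtain ⟨p, w, hp, hw, rfl⟩ :=
      exists_monic_smul_isPrimitiveTuple (ne_zero_of_tupleHeight_eq_coe hv)
    obtain ⟨i, j, hi, hj, hij⟩ := WithBot.add_eq_coe.1 ((tupleHeight_smul p w).symm.trans hv)
    exact ⟨⟨⟨(i, j), mem_antidiagonal.2 hij⟩,
      ⟨p, hp, natDegree_eq_of_degree_eq_some hi.symm⟩, ⟨w, hw, hj.symm⟩⟩, rfl⟩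

variable [Finite F]

theorem card_tupleHeight_eq_sum (k : ℕ) :
    Nat.card {v : ι → F[X] // tupleHeight v = k} =
      ∑ ij ∈ antidiagonal k, Nat.card F ^ ij.1 *
        Nat.card {v : ι → F[X] // IsPrimitiveTuple v ∧ tupleHeight v = ij.2} := by
  have hmonic (i : ℕ) : Finite {p : F[X] // p.Monic ∧ p.natDegree = i} :=
    Nat.finite_of_card_ne_zero <|
      (card_monic_natDegree_eq F i).trans_ne (pow_ne_zero _ Nat.card_pos.ne')
  have hprim (j : ℕ) : Finite {v : ι → F[X] // IsPrimitiveTuple v ∧ tupleHeight v = j} :=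
    (finite_tupleHeight_eq ι F j).subset fun _ hv => hv.2
  rw [card_tupleHeight_eq_card_sigma, Nat.card_sigma]
  simp only [Nat.card_prod, card_monic_natDegree_eq]
  exact Finset.sum_coe_sort _ fun ij : ℕ × ℕ => Nat.card F ^ ij.1 *
    Nat.card {v : ι → F[X] // IsPrimitiveTuple v ∧ tupleHeight v = ij.2}

theorem card_isPrimitiveTuple_tupleHeight_zero :
    Nat.card {v : ι → F[X] // IsPrimitiveTuple v ∧ tupleHeight v = (0 : ℕ)} =
      Nat.card F ^ Fintype.card ι - 1 := by
  simpa using (card_tupleHeight_eq_sum ι F 0).symm.trans (card_tupleHeight_eq ι F 0)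

theorem card_tupleHeight_succ (k : ℕ) :
    Nat.card {v : ι → F[X] // tupleHeight v = (k + 1 : ℕ)} =
      Nat.card {v : ι → F[X] // IsPrimitiveTuple v ∧ tupleHeight v = (k + 1 : ℕ)} +
        Nat.card F * Nat.card {v : ι → F[X] // tupleHeight v = k} := by
  rw [card_tupleHeight_eq_sum, Finset.Nat.sum_antidiagonal_succ, card_tupleHeight_eq_sum,
    Finset.mul_sum]
  simp only [pow_zero, one_mul, pow_succ', mul_assoc]

theorem card_isPrimitiveTuple_tupleHeight_succ (k : ℕ) :
    Nat.card {v : ι → F[X] // IsPrimitiveTuple v ∧ tupleHeight v = (k + 1 : ℕ)} =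
      Nat.card F ^ (Fintype.card ι * k) *
        ((Nat.card F ^ Fintype.card ι - 1) * (Nat.card F ^ Fintype.card ι - Nat.card F)) := by
  have hsucc := card_tupleHeight_succ ι F k
  rw [card_tupleHeight_eq, card_tupleHeight_eq] at hsucc
  generalize Nat.card F ^ Fintype.card ι - 1 = a at hsucc ⊢
  rw [Nat.eq_sub_of_add_eq hsucc.symm, Nat.mul_sub, Nat.mul_sub]
  congr 1 <;> ring

end PrimitiveCount

/-- Counting one-dimensional subspaces of `F^n` of height `k`, where `F = 𝔽_q(X)`:
a one-dimensional subspace has height `k` iff it is spanned by a coprime tuple of polynomials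
of maximal degree `k`.  The count is `q^{nk-n+1}(q^n-1)(q^{n-1}-1)/(q-1)` for `k ≥ 1` and
`(q^n-1)/(q-1)` for `k = 0`. -/
theorem card_one_dim_subspaces_of_height {F : Type*} [Field F] [Fintype F] (q n k : ℕ)
    (hq : Fintype.card F = q) (hn : 2 ≤ n) :
    Nat.card {W : Submodule (RatFunc F) (Fin n → RatFunc F) //
      ∃ A : Fin n → Polynomial F,
        (∀ d : Polynomial F, (∀ i, d ∣ A i) → IsUnit d) ∧
        (Finset.univ.sup fun i => (A i).degree) = (k : WithBot ℕ) ∧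
        W = Submodule.span (RatFunc F)
          {fun i => algebraMap (Polynomial F) (RatFunc F) (A i)}} =
      if k = 0 then (q ^ n - 1) / (q - 1)
      else q ^ (n * k - n + 1) * ((q ^ n - 1) * (q ^ (n - 1) - 1)) / (q - 1) := by
  have hqF : Nat.card F = q := Nat.card_eq_fintype_card.trans hq
  have hq_pos : q - 1 ≠ 0 := Nat.sub_ne_zero_of_lt (hq ▸ Fintype.one_lt_card)
  have hcount := card_span_isPrimitiveTuple_mul_card_units (RatFunc F)
    (p := fun v : Fin n → F[X] => tupleHeight v = k) fun u v hv => by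
      rw [Units.smul_def, tupleHeight_smul, degree_coe_units, zero_add, hv]
  rw [card_units_polynomial, Nat.card_units, hqF] at hcount
  refine (Nat.eq_div_of_mul_eq_left hq_pos hcount).trans ?_
  obtain _ | k := k
  · rw [card_isPrimitiveTuple_tupleHeight_zero, if_pos rfl, hqF, Fintype.card_fin]
  · rw [card_isPrimitiveTuple_tupleHeight_succ, if_neg k.succ_ne_zero, hqF, Fintype.card_fin]
    obtain ⟨m, rfl⟩ : ∃ m, n = m + 1 := Nat.exists_eq_add_one.2 (by omega)
    have hfactor : q ^ (m + 1) - q = q * (q ^ m - 1) := by rw [Nat.mul_sub, mul_one, pow_succ']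
    rw [hfactor, mul_add_one, Nat.add_sub_cancel, Nat.add_sub_cancel, pow_succ]
    ring_nf
end

section
/- Let q be a prime power. For any integer m ≥ 1, the number |S(m)| of ordered triples (A_1, A_2, A_3) of polynomials in F_q[X] with gcd 1 and max degree equal to m is q^{3m-2}(q^3-1)(q^2-1); for m = 0 it is q^3 - 1. -/
open Polynomial

/-!
Put `q = |F|`, let `T(m)` be the set of all nonzero `k`-tuples of maximal degree `m`, and `S(m)` its
subset of coprime tuples. Dividing a tuple by its monic gcd gives a bijection between `T(m)` and the
disjoint union of the sets `{monic polynomials of degree i} × S(j)` over `i + j = m`, so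
`|T(m)| = ∑_{i + j = m} q ^ i |S(j)|`. The terms with `i > 0` add up to `q |T(m - 1)|`, whence
`|S(m)| = |T(m)| - q |T(m - 1)|`, while `|T(m)| = q ^ (k m) (q ^ k - 1)` by counting coefficients.
-/

section JointlyCoprime

variable {M R F ι : Type*}

/-- A family of elements of a commutative monoid is jointly coprime if its common divisors are
units. -/
def IsJointlyCoprime [CommMonoid M] (A : ι → M) : Prop :=
  ∀ d, (∀ i, d ∣ A i) → IsUnit d

theorem isJointlyCoprime_iff_isUnit_gcd [CommMonoidWithZero M] [NormalizedGCDMonoid M] [Fintype ι]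
    {A : ι → M} : IsJointlyCoprime A ↔ IsUnit (Finset.univ.gcd A) :=
  ⟨fun hA ↦ hA _ fun i ↦ Finset.gcd_dvd (Finset.mem_univ i),
    fun hA _ hd ↦ isUnit_of_dvd_unit (Finset.dvd_gcd fun i _ ↦ hd i) hA⟩

namespace IsJointlyCoprime

theorem units_smul [CommMonoid M] {A : ι → M} (hA : IsJointlyCoprime A) (u : Mˣ) :
    IsJointlyCoprime (u • A) :=
  fun d hd ↦ hA d fun i ↦ (Units.dvd_mul_left (u := u)).1 (hd i)

variable [CommMonoidWithZero M] [IsGCDMonoid M] [Finite ι]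

theorem dvd_of_forall_dvd_mul {A : ι → M} (hA : IsJointlyCoprime A) {p r : M}
    (h : ∀ i, p ∣ r * A i) : p ∣ r := by
  cases nonempty_fintype ι
  obtain ⟨_⟩ : Nonempty (NormalizedGCDMonoid M) := inferInstance
  have hdvd : p ∣ r * Finset.univ.gcd A :=
    (Finset.dvd_gcd fun i _ ↦ h i).trans (Finset.gcd_mul_left' Finset.univ A r).dvd
  exact (isJointlyCoprime_iff_isUnit_gcd.1 hA).dvd_mul_right.1 hdvd

theorem exists_eq_smul [Nonempty ι] (A : ι → M) :
    ∃ (d : M) (B : ι → M), IsJointlyCoprime B ∧ A = d • B := by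
  cases nonempty_fintype ι
  obtain ⟨_⟩ : Nonempty (NormalizedGCDMonoid M) := inferInstance
  obtain ⟨B, hAB, hB⟩ := Finset.extract_gcd A Finset.univ_nonempty
  exact ⟨_, B, isJointlyCoprime_iff_isUnit_gcd.2 (hB ▸ isUnit_one),
    funext fun i ↦ hAB i (Finset.mem_univ i)⟩

end IsJointlyCoprime

theorem injOn_smul_monic_isJointlyCoprime [CommRing R] [IsDomain R] [IsGCDMonoid R[X]] [Finite ι] :
    Set.InjOn (fun x : R[X] × (ι → R[X]) ↦ x.1 • x.2)
      {x | x.1.Monic ∧ IsJointlyCoprime x.2} := by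
  rintro ⟨p, A⟩ ⟨hp, hA⟩ ⟨r, B⟩ ⟨hr, hB⟩ (h : p • A = r • B)
  have hpr : p ∣ r := hB.dvd_of_forall_dvd_mul fun i ↦ ⟨A i, congrFun h.symm i⟩
  have hrp : r ∣ p := hA.dvd_of_forall_dvd_mul fun i ↦ ⟨B i, congrFun h i⟩
  obtain rfl : p = r := eq_of_monic_of_associated hp hr (associated_of_dvd_dvd hpr hrp)
  exact congrArg (p, ·) (smul_right_injective _ hp.ne_zero h)

theorem exists_monic_smul_isJointlyCoprime [Field F] [Finite ι] {A : ι → F[X]} (hA : A ≠ 0) :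
    ∃ (p : F[X]) (B : ι → F[X]), p.Monic ∧ IsJointlyCoprime B ∧ p • B = A := by
  classical
  obtain ⟨i, -⟩ := Function.ne_iff.1 hA
  have : Nonempty ι := ⟨i⟩
  obtain ⟨d, B, hB, rfl⟩ := IsJointlyCoprime.exists_eq_smul A
  have hd : d ≠ 0 := by rintro rfl; exact hA (zero_smul _ B)
  obtain ⟨u, hu⟩ : Associated (normalize d) d := normalize_associated d
  exact ⟨normalize d, u • B, monic_normalize hd, hB.units_smul u, by
    rw [Units.smul_def, smul_smul, hu]⟩

end JointlyCoprime

section MaxDegree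

variable {R ι : Type*} [Semiring R] [Fintype ι]

/-- The maximum of the degrees of a finite family of polynomials; it is `⊥` exactly when the family
is zero. -/
def maxDegree (A : ι → R[X]) : WithBot ℕ :=
  Finset.univ.sup fun i ↦ (A i).degree

theorem maxDegree_eq_bot {A : ι → R[X]} : maxDegree A = ⊥ ↔ A = 0 := by
  simp [maxDegree, Finset.sup_eq_bot_iff, funext_iff]

theorem maxDegree_smul [NoZeroDivisors R] (p : R[X]) (A : ι → R[X]) :
    maxDegree (p • A) = p.degree + maxDegree A := by
  simp only [maxDegree, Pi.smul_apply, smul_eq_mul, degree_mul]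
  exact (Finset.apply_sup_eq_sup_comp (p.degree + ·) (add_max p.degree)
    (WithBot.add_bot _)).symm

end MaxDegree

section Counting

open Finset.HasAntidiagonal (antidiagonal)

variable {R F ι : Type*}

/-- The monic polynomials of degree `n`. -/
def monicsOfDegree (R : Type*) [Semiring R] (n : ℕ) : Set R[X] :=
  {p | p.Monic ∧ p.natDegree = n}

variable (R ι) in
/-- The families of polynomials of degree less than `n`. -/
def familiesOfDegreeLT [Semiring R] [Fintype ι] (n : ℕ) : Set (ι → R[X]) :=
  {A | maxDegree A < n}

variable (R ι) in
/-- The families of polynomials of maximal degree `m`. -/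
def familiesOfMaxDegree [Semiring R] [Fintype ι] (m : ℕ) : Set (ι → R[X]) :=
  {A | maxDegree A = m}

variable (R ι) in
/-- The jointly coprime families of polynomials of maximal degree `m`; for `ι = Fin 3` this is
the set `S(m)`. -/
def coprimeFamiliesOfMaxDegree [CommSemiring R] [Fintype ι] (m : ℕ) : Set (ι → R[X]) :=
  {A | IsJointlyCoprime A ∧ maxDegree A = m}

theorem finite_degreeLT [Semiring R] [Finite R] (n : ℕ) : (degreeLT R n : Set R[X]).Finite :=
  Finite.of_equiv _ (degreeLTEquiv R n).toEquiv.symm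

theorem ncard_degreeLT [Semiring R] (n : ℕ) :
    (degreeLT R n : Set R[X]).ncard = Nat.card R ^ n := by
  rw [← Nat.card_coe_set_eq]
  exact (Nat.card_congr (degreeLTEquiv R n).toEquiv).trans (by simp [Nat.card_fun])

section Monic

variable [Semiring R] [Nontrivial R]

theorem ncard_monicsOfDegree (n : ℕ) : (monicsOfDegree R n).ncard = Nat.card R ^ n := by
  rw [← ncard_degreeLT, ← Nat.card_coe_set_eq, ← Nat.card_coe_set_eq]
  exact Nat.card_congr (monicEquivDegreeLT n)

theorem finite_monicsOfDegree [Finite R] (n : ℕ) : (monicsOfDegree R n).Finite :=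
  have := (finite_degreeLT (R := R) n).to_subtype
  Finite.of_equiv _ (monicEquivDegreeLT n).symm

end Monic

section Families

variable [Semiring R] [Fintype ι]

theorem familiesOfDegreeLT_eq_pi (n : ℕ) :
    familiesOfDegreeLT R ι n = Set.univ.pi fun _ ↦ (degreeLT R n : Set R[X]) := by
  ext A
  have hn : ⊥ < (n : WithBot ℕ) := WithBot.bot_lt_coe n
  simp [familiesOfDegreeLT, maxDegree, mem_degreeLT, Finset.sup_lt_iff hn]

theorem ncard_familiesOfDegreeLT (n : ℕ) :
    (familiesOfDegreeLT R ι n).ncard = Nat.card R ^ (Fintype.card ι * n) := by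
  rw [familiesOfDegreeLT_eq_pi, ← Nat.card_coe_set_eq, Nat.card_congr (Equiv.Set.univPi _),
    Nat.card_pi]
  simp only [Nat.card_coe_set_eq, ncard_degreeLT, Finset.prod_const, Finset.card_univ]
  rw [← pow_mul, mul_comm]

theorem familiesOfMaxDegree_eq_sdiff (m : ℕ) :
    familiesOfMaxDegree R ι m = familiesOfDegreeLT R ι (m + 1) \ familiesOfDegreeLT R ι m := by
  ext A
  have hlt : maxDegree A < (m + 1 : ℕ) ↔ maxDegree A ≤ m :=
    Order.lt_succ_iff (b := (m : WithBot ℕ))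
  simp only [familiesOfMaxDegree, familiesOfDegreeLT, Set.mem_sdiff, Set.mem_ofPred_eq, hlt,
    not_lt, le_antisymm_iff]

variable [Finite R]

theorem finite_familiesOfDegreeLT (n : ℕ) : (familiesOfDegreeLT R ι n).Finite :=
  familiesOfDegreeLT_eq_pi (R := R) (ι := ι) n ▸ Set.Finite.pi fun _ ↦ finite_degreeLT n

theorem finite_familiesOfMaxDegree (m : ℕ) : (familiesOfMaxDegree R ι m).Finite :=
  familiesOfMaxDegree_eq_sdiff (R := R) (ι := ι) m ▸ (finite_familiesOfDegreeLT (m + 1)).sdiff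

theorem ncard_familiesOfMaxDegree (m : ℕ) :
    (familiesOfMaxDegree R ι m).ncard =
      Nat.card R ^ (Fintype.card ι * m) * (Nat.card R ^ Fintype.card ι - 1) := by
  have hsub : familiesOfDegreeLT R ι m ⊆ familiesOfDegreeLT R ι (m + 1) :=
    fun _ hA ↦ lt_trans (b := (m : WithBot ℕ)) hA (Nat.cast_lt.2 m.lt_succ_self)
  rw [familiesOfMaxDegree_eq_sdiff, Set.ncard_sdiff hsub (finite_familiesOfDegreeLT m),
    ncard_familiesOfDegreeLT, ncard_familiesOfDegreeLT, mul_add_one, pow_add, Nat.mul_sub_one]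

end Families

theorem finite_coprimeFamiliesOfMaxDegree [CommSemiring R] [Finite R] [Fintype ι] (m : ℕ) :
    (coprimeFamiliesOfMaxDegree R ι m).Finite :=
  (finite_familiesOfMaxDegree m).subset fun _ hA ↦ hA.2

variable [Field F] [Fintype ι]

theorem familiesOfMaxDegree_eq_image_smul (m : ℕ) :
    familiesOfMaxDegree F ι m =
      (fun x : F[X] × (ι → F[X]) ↦ x.1 • x.2) ''
        ⋃ d ∈ antidiagonal m, monicsOfDegree F d.1 ×ˢ coprimeFamiliesOfMaxDegree F ι d.2 := by
  ext A
  simp only [Set.mem_image, Set.mem_iUnion, Finset.HasAntidiagonal.mem_antidiagonal, Prod.exists]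
  constructor
  · intro (hA : maxDegree A = m)
    have hA0 : A ≠ 0 := fun h ↦ by simp [maxDegree_eq_bot.2 h] at hA
    obtain ⟨p, B, hp, hB, rfl⟩ := exists_monic_smul_isJointlyCoprime hA0
    rw [maxDegree_smul, degree_eq_natDegree hp.ne_zero] at hA
    obtain ⟨k, hk⟩ : ∃ k : ℕ, (k : WithBot ℕ) = maxDegree B :=
      WithBot.ne_bot_iff_exists.1 fun h ↦ by simp [h] at hA
    rw [← hk] at hA
    exact ⟨p, B, ⟨p.natDegree, k, mod_cast hA, ⟨hp, rfl⟩, hB, hk.symm⟩, rfl⟩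
  · rintro ⟨p, B, ⟨i, j, hij, ⟨hp, hpi⟩, -, hBj⟩, rfl⟩
    change maxDegree (p • B) = m
    rw [maxDegree_smul, degree_eq_natDegree hp.ne_zero, hpi, hBj, ← hij, Nat.cast_add]

variable [Finite F]

theorem ncard_familiesOfMaxDegree_eq_sum (m : ℕ) :
    (familiesOfMaxDegree F ι m).ncard =
      ∑ d ∈ antidiagonal m, Nat.card F ^ d.1 * (coprimeFamiliesOfMaxDegree F ι d.2).ncard := by
  have hinj : Set.InjOn (fun x : F[X] × (ι → F[X]) ↦ x.1 • x.2)
      (⋃ d ∈ antidiagonal m, monicsOfDegree F d.1 ×ˢ coprimeFamiliesOfMaxDegree F ι d.2) := by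
    refine injOn_smul_monic_isJointlyCoprime.mono ?_
    exact Set.iUnion₂_subset fun _ _ _ hx ↦ ⟨hx.1.1, hx.2.1⟩
  have hdisj : (antidiagonal m : Set (ℕ × ℕ)).PairwiseDisjoint fun d ↦
      monicsOfDegree F d.1 ×ˢ coprimeFamiliesOfMaxDegree F ι d.2 := by
    rintro ⟨i, j⟩ - ⟨k, l⟩ - hne
    refine Set.disjoint_left.2 fun x ⟨hi, hj⟩ ⟨hk, hl⟩ ↦ hne (Prod.ext ?_ ?_)
    · exact hi.2.symm.trans hk.2
    · exact_mod_cast hj.2.symm.trans hl.2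
  have hfin : ∀ d ∈ (antidiagonal m : Set (ℕ × ℕ)),
      (monicsOfDegree F d.1 ×ˢ coprimeFamiliesOfMaxDegree F ι d.2).Finite := fun d _ ↦
    (finite_monicsOfDegree d.1).prod (finite_coprimeFamiliesOfMaxDegree d.2)
  have hunion := (Finset.finite_toSet _).ncard_biUnion hfin hdisj
  rw [finsum_mem_coe_finset] at hunion
  simp only [Finset.mem_coe, Set.ncard_prod, ncard_monicsOfDegree] at hunion
  rw [familiesOfMaxDegree_eq_image_smul, hinj.ncard_image, hunion]

theorem ncard_familiesOfMaxDegree_succ (m : ℕ) :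
    (familiesOfMaxDegree F ι (m + 1)).ncard =
      (coprimeFamiliesOfMaxDegree F ι (m + 1)).ncard +
        Nat.card F * (familiesOfMaxDegree F ι m).ncard := by
  rw [ncard_familiesOfMaxDegree_eq_sum, Finset.Nat.sum_antidiagonal_succ,
    ncard_familiesOfMaxDegree_eq_sum, Finset.mul_sum]
  simp [pow_succ', mul_assoc]

theorem ncard_coprimeFamiliesOfMaxDegree_zero :
    (coprimeFamiliesOfMaxDegree F ι 0).ncard = Nat.card F ^ Fintype.card ι - 1 := by
  have h := ncard_familiesOfMaxDegree_eq_sum (F := F) (ι := ι) 0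
  simpa [ncard_familiesOfMaxDegree] using h.symm

theorem ncard_coprimeFamiliesOfMaxDegree_succ (m : ℕ) :
    (coprimeFamiliesOfMaxDegree F ι (m + 1)).ncard =
      Nat.card F ^ (Fintype.card ι * m) *
        ((Nat.card F ^ Fintype.card ι - 1) * (Nat.card F ^ Fintype.card ι - Nat.card F)) := by
  have h := ncard_familiesOfMaxDegree_succ (F := F) (ι := ι) m
  rw [ncard_familiesOfMaxDegree, ncard_familiesOfMaxDegree] at h
  calc
    _ = Nat.card F ^ (Fintype.card ι * (m + 1)) * (Nat.card F ^ Fintype.card ι - 1) -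
        Nat.card F * (Nat.card F ^ (Fintype.card ι * m) * (Nat.card F ^ Fintype.card ι - 1)) :=
      Nat.eq_sub_of_add_eq h.symm
    _ = Nat.card F ^ (Fintype.card ι * m) * (Nat.card F ^ Fintype.card ι - 1) *
        (Nat.card F ^ Fintype.card ι - Nat.card F) := by
      rw [Nat.mul_sub _ _ (Nat.card F), mul_add_one, pow_add, mul_right_comm, mul_comm (Nat.card F)]
    _ = _ := mul_assoc _ _ _

theorem card_coprime_triples_of_max_degree_general (m : ℕ) :
    Nat.card {A : ι → F[X] // IsJointlyCoprime A ∧ maxDegree A = m} =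
      if m = 0 then Nat.card F ^ Fintype.card ι - 1
      else Nat.card F ^ (Fintype.card ι * m - (Fintype.card ι - 1)) *
        ((Nat.card F ^ Fintype.card ι - 1) * (Nat.card F ^ (Fintype.card ι - 1) - 1)) := by
  change Nat.card (coprimeFamiliesOfMaxDegree F ι m) = _
  rw [Nat.card_coe_set_eq]
  cases m with
  | zero => exact ncard_coprimeFamiliesOfMaxDegree_zero
  | succ m =>
    rw [ncard_coprimeFamiliesOfMaxDegree_succ, if_neg m.succ_ne_zero]
    rcases Fintype.card ι with _ | k
    · simp
    · have hexp : (k + 1) * (m + 1) - k = (k + 1) * m + 1 := by grind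
      have hfactor : Nat.card F ^ (k + 1) - Nat.card F = Nat.card F * (Nat.card F ^ k - 1) := by
        rw [pow_succ', Nat.mul_sub_one]
      rw [Nat.add_sub_cancel, hexp, hfactor]
      ring

end Counting

/-- The number of ordered triples `(A₁, A₂, A₃)` of polynomials over `𝔽_q` with gcd 1 and
maximal degree `m` is `q^{3m-2}(q³-1)(q²-1)` for `m ≥ 1`, and `q³ - 1` for `m = 0`. -/
theorem card_coprime_triples_of_max_degree {F : Type*} [Field F] [Fintype F] (q m : ℕ)
    (hq : Fintype.card F = q) :
    Nat.card {A : Fin 3 → Polynomial F //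
      (∀ d : Polynomial F, (∀ i, d ∣ A i) → IsUnit d) ∧
      (Finset.univ.sup fun i => (A i).degree) = (m : WithBot ℕ)} =
      if m = 0 then q ^ 3 - 1
      else q ^ (3 * m - 2) * ((q ^ 3 - 1) * (q ^ 2 - 1)) := by
  simpa [IsJointlyCoprime, maxDegree, hq] using
    card_coprime_triples_of_max_degree_general (F := F) (ι := Fin 3) m
end

section
/- Let q be a prime power and let m > 2l ≥ 0 be integers. The number of ordered triples (A_1, A_2, A_3) of coprime polynomials in F_q[X] with max degree m such that the equation x_1 A_1 + x_2 A_2 + x_3 A_3 = 0 has a solution in F_q(X)^3 of height l is |S(m,l)| = q^{2(m+l)-3}(q^3-1)(q^2-1)^2 if l ≥ 1, and q^{2m-1}(q^3-1)(q^2-1) if l = 0. -/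
open Polynomial

open scoped Matrix
open Finset.HasAntidiagonal (antidiagonal mem_antidiagonal)

/-!
Pairs `(A, P)` of orthogonal coprime triples of heights `m` and `l` are counted in two ways.

For fixed `A`, the cross product of two solutions `P`, `Q` of height `l` is a multiple of `A` of
height at most `2 * l < m`. Hence it vanishes, and the solutions are the `q - 1` multiples of one of
them by nonzero constants.

For fixed `P`, divide tuples by their monic gcd: in a set closed under this operation the numbers
`N n` of elements of height less than `n` determine the number of coprime elements of height `k + 1`
as `N (k + 2) - (q + 1) * N (k + 1) + q * N k`. For the tuples orthogonal to `P`, `N n` follows from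
the fact that `A ↦ P ⬝ᵥ A` maps the tuples of height less than `n` onto the polynomials of degree
less than `n + l`, once `l ≤ n`.
-/

/-- A tuple `v` is coprime if its entries have no common divisor other than units. This is joint
coprimality, as required of the tuples counted here, not pairwise coprimality. -/
def IsCoprimeTuple {ι R : Type*} [Monoid R] (v : ι → R) : Prop :=
  ∀ d : R, (∀ i, d ∣ v i) → IsUnit d

section CoprimeTuple

variable {ι R : Type*}

theorem IsCoprimeTuple.units_smul [CommMonoid R] {v : ι → R} (hv : IsCoprimeTuple v) (u : Rˣ) :
    IsCoprimeTuple (u • v) :=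
  fun d hd => hv d fun i => by simpa using dvd_smul_of_dvd u⁻¹ (hd i)

theorem IsCoprimeTuple.ne_zero [MonoidWithZero R] [Nontrivial R] {v : ι → R}
    (hv : IsCoprimeTuple v) : v ≠ 0 := by
  rintro rfl
  exact not_isUnit_zero (hv 0 fun _ => dvd_rfl)

theorem dvd_dotProduct [Fintype ι] [CommSemiring R] {a : R} {v : ι → R} (hv : ∀ i, a ∣ v i)
    (c : ι → R) : a ∣ c ⬝ᵥ v :=
  Finset.dvd_sum fun i _ => (hv i).mul_left _

theorem isCoprimeTuple_of_dotProduct_eq_one [Fintype ι] [CommSemiring R] {c v : ι → R}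
    (h : c ⬝ᵥ v = 1) : IsCoprimeTuple v :=
  fun _ hd => isUnit_of_dvd_one (h ▸ dvd_dotProduct hd c)

variable [CommRing R] [IsBezout R]

theorem exists_dotProduct_dvd [Fintype ι] (v : ι → R) : ∃ c : ι → R, ∀ i, c ⬝ᵥ v ∣ v i := by
  obtain ⟨g, hg⟩ := IsBezout.isPrincipal_of_FG (Ideal.span (Set.range v))
    (Submodule.fg_span (Set.finite_range v))
  have hg_mem : g ∈ Ideal.span (Set.range v) := by
    rw [hg]
    exact Ideal.mem_span_singleton_self g
  obtain ⟨c, rfl⟩ := Ideal.mem_span_range_iff_exists_fun.1 hg_mem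
  exact ⟨c, fun i => Ideal.mem_span_singleton.1 (hg.le (Ideal.subset_span ⟨i, rfl⟩))⟩

theorem IsCoprimeTuple.exists_dotProduct_eq_one [Fintype ι] {v : ι → R}
    (hv : IsCoprimeTuple v) : ∃ c : ι → R, c ⬝ᵥ v = 1 := by
  obtain ⟨c, hc⟩ := exists_dotProduct_dvd v
  obtain ⟨u, hu⟩ := (hv _ hc).exists_left_inv
  exact ⟨u • c, by rw [smul_dotProduct, smul_eq_mul, hu]⟩

theorem exists_eq_smul_isCoprimeTuple [Finite ι] [IsDomain R] {v : ι → R} (hv : v ≠ 0) :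
    ∃ (g : R) (w : ι → R), IsCoprimeTuple w ∧ v = g • w := by
  have := Fintype.ofFinite ι
  obtain ⟨c, hc⟩ := exists_dotProduct_dvd v
  choose w hw using hc
  replace hw : v = (c ⬝ᵥ v) • w := funext hw
  have hg : c ⬝ᵥ v ≠ 0 := fun h => hv (by rw [hw, h, zero_smul])
  refine ⟨c ⬝ᵥ v, w, isCoprimeTuple_of_dotProduct_eq_one (c := c) (mul_left_cancel₀ hg ?_), hw⟩
  rw [← smul_eq_mul, ← dotProduct_smul, ← hw, mul_one]

theorem IsCoprimeTuple.dvd_of_smul_eq_smul [Finite ι] {v w : ι → R} (hw : IsCoprimeTuple w)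
    {a b : R} (h : a • v = b • w) : a ∣ b := by
  have := Fintype.ofFinite ι
  obtain ⟨c, hc⟩ := hw.exists_dotProduct_eq_one
  have hb : c ⬝ᵥ (b • w) = b := by rw [dotProduct_smul, hc, smul_eq_mul, mul_one]
  rw [← hb, ← h]
  exact dvd_dotProduct (fun i => dvd_mul_right a (v i)) c

theorem IsCoprimeTuple.eq_smul_of_crossProduct_eq_zero {v w : Fin 3 → R}
    (hv : IsCoprimeTuple v) (hvw : v ⨯₃ w = 0) : ∃ t : R, w = t • v := by
  obtain ⟨c, hc⟩ := hv.exists_dotProduct_eq_one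
  have h := cross_cross_eq_smul_sub_smul' c v w
  rw [hvw, map_zero, dotProduct_comm v, hc, one_smul] at h
  exact ⟨c ⬝ᵥ w, (sub_eq_zero.1 h.symm).symm⟩

end CoprimeTuple

/-- The height of a tuple of polynomials: the maximum of the degrees of its entries. It is `⊥` for
the zero tuple. For coprime tuples it is the height of the point of projective space they
represent. -/
noncomputable def polyHeight {ι R : Type*} [Fintype ι] [Semiring R] (A : ι → R[X]) : WithBot ℕ :=
  Finset.univ.sup fun i => (A i).degree

section Height

variable {ι R : Type*} [Fintype ι]

section Semiring

variable [Semiring R]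

theorem degree_le_polyHeight (A : ι → R[X]) (i : ι) : (A i).degree ≤ polyHeight A :=
  Finset.le_sup (f := fun i => (A i).degree) (Finset.mem_univ i)

theorem exists_degree_eq_polyHeight {A : ι → R[X]} (hA : A ≠ 0) :
    ∃ i, (A i).degree = polyHeight A := by
  have ⟨i, _⟩ := Function.ne_iff.1 hA
  obtain ⟨j, -, hj⟩ :=
    Finset.exists_mem_eq_sup Finset.univ ⟨i, Finset.mem_univ i⟩ fun i => (A i).degree
  exact ⟨j, hj.symm⟩

theorem polyHeight_smul [NoZeroDivisors R] (D : R[X]) (A : ι → R[X]) :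
    polyHeight (D • A) = D.degree + polyHeight A := by
  simp only [polyHeight, Pi.smul_apply, smul_eq_mul, degree_mul]
  exact (Finset.apply_sup_eq_sup_comp_of_linearOrder (D.degree + ·) add_right_mono
    (WithBot.add_bot _)).symm

theorem degree_dotProduct_le (A B : ι → R[X]) :
    (A ⬝ᵥ B).degree ≤ polyHeight A + polyHeight B :=
  (degree_sum_le _ _).trans <| Finset.sup_le fun i _ => (degree_mul_le _ _).trans <|
    add_le_add (degree_le_polyHeight A i) (degree_le_polyHeight B i)

end Semiring

theorem polyHeight_crossProduct_le [CommRing R] (A B : Fin 3 → R[X]) :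
    polyHeight (A ⨯₃ B) ≤ polyHeight A + polyHeight B := by
  have degree_minor_le (i j k l : Fin 3) :
      (A i * B j - A k * B l).degree ≤ polyHeight A + polyHeight B :=
    (degree_sub_le _ _).trans <| max_le
      ((degree_mul_le _ _).trans (add_le_add (degree_le_polyHeight A i) (degree_le_polyHeight B j)))
      ((degree_mul_le _ _).trans (add_le_add (degree_le_polyHeight A k) (degree_le_polyHeight B l)))
  refine Finset.sup_le fun i _ => ?_
  fin_cases i <;> simpa [cross_apply] using degree_minor_le _ _ _ _

end Height

/-- The tuples of polynomials of height less than `n`, as an `R`-submodule of `ι → R[X]`. As in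
`Polynomial.degreeLT` the bound is strict, so that the rank is `n` times the number of entries. -/
noncomputable def heightLT (R ι : Type*) [Semiring R] (n : ℕ) : Submodule R (ι → R[X]) :=
  Submodule.pi Set.univ fun _ => degreeLT R n

/-- The coprime tuples of polynomials of height `k`: the normalized tuples of the paper. -/
def coprimeTuples (R ι : Type*) [Semiring R] [Fintype ι] (k : ℕ) : Set (ι → R[X]) :=
  {A | IsCoprimeTuple A ∧ polyHeight A = k}

/-- The coprime tuples `A` of height `m` for which the linear equation `∑ i, x i * A i = 0` has a
normalized solution of height `l`. For `ι = Fin 3` this is the set `S(m, l)` of the paper. -/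
def coprimeTuplesWithSolution (R ι : Type*) [Semiring R] [Fintype ι] (m l : ℕ) : Set (ι → R[X]) :=
  {A ∈ coprimeTuples R ι m | ∃ P ∈ coprimeTuples R ι l, P ⬝ᵥ A = 0}

theorem mem_heightLT {ι R : Type*} [Semiring R] {n : ℕ} {A : ι → R[X]} :
    A ∈ heightLT R ι n ↔ ∀ i, (A i).degree < n := by
  simp [heightLT, mem_degreeLT]

theorem polyHeight_lt_iff {ι R : Type*} [Semiring R] [Fintype ι] {n : ℕ} {A : ι → R[X]} :
    polyHeight A < n ↔ A ∈ heightLT R ι n := by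
  rw [mem_heightLT, polyHeight, Finset.sup_lt_iff (WithBot.bot_lt_natCast n)]
  simp only [Finset.mem_univ, true_imp_iff]

theorem natCard_degreeLT {R : Type*} [Semiring R] (n : ℕ) :
    Nat.card (degreeLT R n) = Nat.card R ^ n := by
  rw [Nat.card_congr (degreeLTEquiv R n).toEquiv, Nat.card_fun, Nat.card_fin]

theorem natCard_heightLT {ι R : Type*} [Fintype ι] [Semiring R] (n : ℕ) :
    Nat.card (heightLT R ι n) = (Nat.card R ^ Fintype.card ι) ^ n := by
  calc Nat.card (heightLT R ι n) = Nat.card (ι → degreeLT R n) :=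
        Nat.card_congr (Equiv.Set.univPi fun _ : ι => (degreeLT R n : Set R[X]))
    _ = (Nat.card R ^ Fintype.card ι) ^ n := by
        rw [Nat.card_fun, natCard_degreeLT, Nat.card_eq_fintype_card (α := ι), pow_right_comm]

theorem ncard_heightLT {ι R : Type*} [Fintype ι] [Semiring R] (n : ℕ) :
    (heightLT R ι n : Set (ι → R[X])).ncard = (Nat.card R ^ Fintype.card ι) ^ n :=
  (Nat.card_coe_set_eq _).symm.trans (natCard_heightLT n)

theorem finite_heightLT {ι R : Type*} [Finite ι] [Semiring R] [Finite R] (n : ℕ) :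
    (heightLT R ι n : Set (ι → R[X])).Finite :=
  Set.Finite.pi fun _ => Finite.of_equiv _ (degreeLTEquiv R n).symm.toEquiv

theorem finite_coprimeTuples {ι R : Type*} [Fintype ι] [Semiring R] [Finite R] (k : ℕ) :
    (coprimeTuples R ι k).Finite :=
  (finite_heightLT (k + 1)).subset fun A hA => polyHeight_lt_iff.1 <| by
    rw [hA.2]
    exact_mod_cast k.lt_succ_self

theorem ncard_polyHeight_eq_add_ncard_inter_heightLT {ι R : Type*} [Fintype ι] [Semiring R]
    [Finite R] (S : Set (ι → R[X])) (k : ℕ) :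
    (S ∩ {A | polyHeight A = k}).ncard + (S ∩ heightLT R ι k).ncard =
      (S ∩ heightLT R ι (k + 1)).ncard := by
  have hlt (A : ι → R[X]) : A ∈ heightLT R ι (k + 1) ↔ polyHeight A ≤ k := by
    rw [← polyHeight_lt_iff]
    induction polyHeight A with
    | bot => simp
    | coe h => exact WithBot.coe_lt_coe.trans (Nat.lt_succ_iff.trans WithBot.coe_le_coe.symm)
  have hsdiff : S ∩ {A | polyHeight A = k} =
      (S ∩ heightLT R ι (k + 1)) \ (S ∩ heightLT R ι k) := by
    ext A
    simp only [Set.mem_inter_iff, Set.mem_sdiff, SetLike.mem_coe, hlt, ← polyHeight_lt_iff,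
      Set.mem_ofPred_eq, le_antisymm_iff, not_and, not_lt]
    tauto
  rw [hsdiff]
  refine Set.ncard_sdiff_add_ncard_of_subset (Set.inter_subset_inter_right S fun A hA => ?_)
    ((finite_heightLT _).inter_of_right S)
  exact (hlt A).2 (polyHeight_lt_iff.2 hA).le

section GcdDecomposition

variable {F ι : Type*} [Field F]

theorem exists_monic_smul_eq_of_polyHeight_eq [Fintype ι] {A : ι → F[X]} {k : ℕ}
    (hA : polyHeight A = k) : ∃ (D : F[X]) (j : ℕ) (B : ι → F[X]),
      D.Monic ∧ D.natDegree + j = k ∧ B ∈ coprimeTuples F ι j ∧ D • B = A := by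
  classical
  have hA0 : A ≠ 0 := by
    rintro rfl
    simp [polyHeight] at hA
  obtain ⟨g, B, hB, rfl⟩ := exists_eq_smul_isCoprimeTuple hA0
  have hg : g ≠ 0 := left_ne_zero_of_smul hA0
  have hgB : normalize g • (normUnit g)⁻¹ • B = g • B := by
    rw [normalize_apply, Units.smul_def, smul_smul, Units.mul_inv_cancel_right]
  rw [← hgB, polyHeight_smul, degree_eq_natDegree (monic_normalize hg).ne_zero] at hA
  obtain ⟨j, hj⟩ : ∃ j : ℕ, (j : WithBot ℕ) = polyHeight ((normUnit g)⁻¹ • B) :=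
    WithBot.ne_bot_iff_exists.1 (ne_of_apply_ne _ (hA.trans_ne (by simp)))
  refine ⟨normalize g, j, (normUnit g)⁻¹ • B, monic_normalize hg, ?_,
    ⟨hB.units_smul _, hj.symm⟩, hgB⟩
  rw [← hj] at hA
  exact_mod_cast hA

theorem eq_and_eq_of_monic_smul_eq_smul [Finite ι] {D E : F[X]} {B C : ι → F[X]}
    (hD : D.Monic) (hE : E.Monic) (hB : IsCoprimeTuple B) (hC : IsCoprimeTuple C)
    (h : D • B = E • C) : D = E ∧ B = C := by
  obtain rfl : D = E := eq_of_monic_of_associated hD hE <|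
    associated_of_dvd_dvd (hC.dvd_of_smul_eq_smul h) (hB.dvd_of_smul_eq_smul h.symm)
  exact ⟨rfl, smul_right_injective _ hD.ne_zero h⟩

end GcdDecomposition

/-- A subset `S` of an `R`-module is saturated if membership in `S` does not change under
multiplication by a nonzero scalar. It ensures that a tuple of polynomials belongs to `S` if and
only if the coprime tuple obtained by dividing out the gcd does. -/
def IsSaturated {R M : Type*} [Zero R] [SMul R M] (S : Set M) : Prop :=
  ∀ (r : R), r ≠ 0 → ∀ x : M, r • x ∈ S ↔ x ∈ S

theorem isSaturated_univ {R M : Type*} [Zero R] [SMul R M] :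
    IsSaturated (R := R) (Set.univ : Set M) :=
  fun _ _ _ => Iff.rfl

theorem isSaturated_dotProduct_eq_zero {ι R : Type*} [Fintype ι] [CommSemiring R] [NoZeroDivisors R]
    (v : ι → R) : IsSaturated (R := R) {w | v ⬝ᵥ w = 0} := fun r hr w => by
  simp only [Set.mem_ofPred_eq, dotProduct_smul, smul_eq_mul, mul_eq_zero, hr, false_or]

section SaturatedCount

variable {F ι : Type*} [Field F] [Finite F] [Fintype ι] {S : Set (ι → F[X])}

theorem IsSaturated.ncard_polyHeight_eq_sum (hS : IsSaturated (R := F[X]) S) (k : ℕ) :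
    (S ∩ {A | polyHeight A = k}).ncard =
      ∑ x ∈ antidiagonal k, Nat.card F ^ x.1 * (S ∩ coprimeTuples F ι x.2).ncard := by
  let f : (Σ x : antidiagonal k, {D : F[X] // D.Monic ∧ D.natDegree = x.1.1} ×
      ↥(S ∩ coprimeTuples F ι x.1.2)) → ↥(S ∩ {A | polyHeight A = k}) := fun x =>
    ⟨x.2.1.1 • x.2.2.1, (hS _ x.2.1.2.1.ne_zero _).2 x.2.2.2.1, by
      rw [Set.mem_ofPred_eq, polyHeight_smul, x.2.2.2.2.2,
        degree_eq_natDegree x.2.1.2.1.ne_zero, x.2.1.2.2]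
      exact_mod_cast mem_antidiagonal.1 x.1.2⟩
  have hf_inj : Function.Injective f := by
    rintro ⟨⟨⟨a, b⟩, _⟩, ⟨D, hD, hDa⟩, B, _, hB, hBb⟩ ⟨⟨⟨c, d⟩, _⟩, ⟨E, hE, hEc⟩, C, _, hC, hCd⟩ h
    obtain ⟨rfl, rfl⟩ := eq_and_eq_of_monic_smul_eq_smul hD hE hB hC (congrArg Subtype.val h)
    obtain rfl : a = c := hDa.symm.trans hEc
    obtain rfl : b = d := by exact_mod_cast hBb.symm.trans hCd
    rfl
  have hf_surj : Function.Surjective f := by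
    rintro ⟨A, hAS, hAk⟩
    obtain ⟨D, j, B, hD, hDj, hB, rfl⟩ := exists_monic_smul_eq_of_polyHeight_eq hAk
    exact ⟨⟨⟨(D.natDegree, j), mem_antidiagonal.2 hDj⟩, ⟨D, hD, rfl⟩,
      B, (hS D hD.ne_zero B).1 hAS, hB⟩, rfl⟩
  have hfin (x : antidiagonal k) : Finite ({D : F[X] // D.Monic ∧ D.natDegree = x.1.1} ×
      ↥(S ∩ coprimeTuples F ι x.1.2)) := by
    have := Finite.of_equiv _
      ((monicEquivDegreeLT x.1.1).trans (degreeLTEquiv F x.1.1).toEquiv).symm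
    have := ((finite_coprimeTuples (R := F) (ι := ι) x.1.2).inter_of_right S).to_subtype
    infer_instance
  rw [← Nat.card_coe_set_eq, ← Nat.card_congr (Equiv.ofBijective f ⟨hf_inj, hf_surj⟩),
    Nat.card_sigma]
  refine (Finset.sum_congr rfl fun x _ => ?_).trans (Finset.sum_coe_sort (antidiagonal k)
    fun x => Nat.card F ^ x.1 * (S ∩ coprimeTuples F ι x.2).ncard)
  rw [Nat.card_prod, Nat.card_congr (monicEquivDegreeLT x.1.1), natCard_degreeLT,
    Nat.card_coe_set_eq]

theorem IsSaturated.ncard_inter_coprimeTuples_zero (hS : IsSaturated (R := F[X]) S) :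
    (S ∩ coprimeTuples F ι 0).ncard + (S ∩ heightLT F ι 0).ncard = (S ∩ heightLT F ι 1).ncard := by
  rw [← ncard_polyHeight_eq_add_ncard_inter_heightLT, hS.ncard_polyHeight_eq_sum]
  simp

theorem IsSaturated.ncard_inter_coprimeTuples_succ (hS : IsSaturated (R := F[X]) S) (k : ℕ) :
    (S ∩ coprimeTuples F ι (k + 1)).ncard + (Nat.card F + 1) * (S ∩ heightLT F ι (k + 1)).ncard =
      (S ∩ heightLT F ι (k + 2)).ncard + Nat.card F * (S ∩ heightLT F ι k).ncard := by
  have hrec : (S ∩ {A | polyHeight A = (k + 1 : ℕ)}).ncard =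
      (S ∩ coprimeTuples F ι (k + 1)).ncard + Nat.card F * (S ∩ {A | polyHeight A = k}).ncard := by
    rw [hS.ncard_polyHeight_eq_sum, hS.ncard_polyHeight_eq_sum,
      Finset.Nat.sum_antidiagonal_succ, Finset.mul_sum]
    simp only [pow_zero, one_mul, pow_succ', mul_assoc]
  have hk := ncard_polyHeight_eq_add_ncard_inter_heightLT S k
  have hk' := ncard_polyHeight_eq_add_ncard_inter_heightLT S (k + 1)
  linear_combination hk' - hrec - Nat.card F * hk

theorem IsSaturated.ncard_inter_coprimeTuples_succ_mul (hS : IsSaturated (R := F[X]) S) {k : ℕ}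
    {c r : ℤ} (hN : ∀ n ≥ k, (S ∩ heightLT F ι n).ncard * c = r ^ n) :
    (S ∩ coprimeTuples F ι (k + 1)).ncard * c = r ^ k * ((r - 1) * (r - Nat.card F)) := by
  have h : ((S ∩ coprimeTuples F ι (k + 1)).ncard +
      (Nat.card F + 1) * (S ∩ heightLT F ι (k + 1)).ncard : ℤ) =
      (S ∩ heightLT F ι (k + 2)).ncard + Nat.card F * (S ∩ heightLT F ι k).ncard :=
    mod_cast hS.ncard_inter_coprimeTuples_succ k
  linear_combination c * h + hN (k + 2) (by lia) + Nat.card F * hN k le_rfl -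
    (Nat.card F + 1) * hN (k + 1) (by lia)

theorem ncard_coprimeTuples_zero :
    ((coprimeTuples F ι 0).ncard : ℤ) = Nat.card F ^ Fintype.card ι - 1 := by
  have h := (isSaturated_univ (R := F[X]) (M := ι → F[X])).ncard_inter_coprimeTuples_zero
  simp only [Set.univ_inter, ncard_heightLT, pow_zero, pow_one] at h
  exact eq_sub_of_add_eq (mod_cast h)

theorem ncard_coprimeTuples_succ (k : ℕ) :
    ((coprimeTuples F ι (k + 1)).ncard : ℤ) = (Nat.card F ^ Fintype.card ι) ^ k *
      ((Nat.card F ^ Fintype.card ι - 1) * (Nat.card F ^ Fintype.card ι - Nat.card F)) := by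
  have h := (isSaturated_univ (R := F[X]) (M := ι → F[X])).ncard_inter_coprimeTuples_succ_mul
    (k := k) (c := 1) (r := Nat.card F ^ Fintype.card ι) fun n _ => by
      rw [Set.univ_inter, ncard_heightLT, mul_one, Nat.cast_pow, Nat.cast_pow]
  rwa [Set.univ_inter, mul_one] at h

end SaturatedCount

theorem natCard_ker_inf_mul_natCard_map {R M N : Type*} [Ring R] [AddCommGroup M] [AddCommGroup N]
    [Module R M] [Module R N] (f : M →ₗ[R] N) (K : Submodule R M) :
    Nat.card ↥(LinearMap.ker f ⊓ K) * Nat.card ↥(K.map f) = Nat.card K := by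
  have h := AddSubgroup.relIndex_mul_relIndex ⊥ (f.toAddMonoidHom.ker ⊓ K.toAddSubgroup)
    K.toAddSubgroup bot_le inf_le_right
  rw [AddSubgroup.relIndex_bot_left, AddSubgroup.inf_relIndex_right, AddSubgroup.relIndex_ker,
    AddSubgroup.relIndex_bot_left] at h
  exact h

theorem degree_dotProduct_lt {ι R : Type*} [Fintype ι] [Semiring R] {P A : ι → R[X]} {l n : ℕ}
    (hP : polyHeight P = l) (hA : A ∈ heightLT R ι n) : (P ⬝ᵥ A).degree < (n + l : ℕ) := by
  refine (degree_dotProduct_le P A).trans_lt ?_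
  rw [hP, add_comm, Nat.cast_add]
  exact WithBot.add_lt_add_right (WithBot.natCast_ne_bot l) (polyHeight_lt_iff.2 hA)

section DotProduct

variable {F ι : Type*} [Field F] [Fintype ι] {P : ι → F[X]} {l n : ℕ}

theorem exists_dotProduct_eq_of_degree_lt (hP : P ∈ coprimeTuples F ι l) (hln : l ≤ n) {f : F[X]}
    (hf : f.degree < (n + l : ℕ)) : ∃ A ∈ heightLT F ι n, P ⬝ᵥ A = f := by
  classical
  obtain ⟨c, hc⟩ := hP.1.exists_dotProduct_eq_one
  obtain ⟨j, hj⟩ := exists_degree_eq_polyHeight hP.1.ne_zero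
  rw [hP.2] at hj
  have hPj : P j ≠ 0 := fun h => by simp [h] at hj
  -- Reduce the Bézout solution `f • c` modulo an entry of maximal degree, moving the quotients into
  -- the coordinate of that entry.
  let r : ι → F[X] := fun i => f * c i % P j
  let s : ι → F[X] := fun i => f * c i / P j
  have hr : r ∈ heightLT F ι n := mem_heightLT.2 fun i =>
    (degree_mod_lt _ hPj).trans_le (hj.trans_le (by exact_mod_cast hln))
  have hrs : P ⬝ᵥ r + P j * (P ⬝ᵥ s) = f := by
    have hdiv : r + P j • s = f • c := funext fun i => EuclideanDomain.mod_add_div _ _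
    rw [← smul_eq_mul, ← dotProduct_smul, ← dotProduct_add, hdiv, dotProduct_smul,
      dotProduct_comm, hc, smul_eq_mul, mul_one]
  have hs : (P ⬝ᵥ s).degree < n := by
    have hPs : (P j * (P ⬝ᵥ s)).degree < (n + l : ℕ) := by
      rw [eq_sub_of_add_eq' hrs]
      exact (degree_sub_le _ _).trans_lt (max_lt hf (degree_dotProduct_lt hP.2 hr))
    rw [degree_mul, hj, add_comm, Nat.cast_add] at hPs
    exact lt_of_add_lt_add_right hPs
  refine ⟨r + Pi.single j (P ⬝ᵥ s), add_mem hr (mem_heightLT.2 fun i => ?_), ?_⟩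
  · obtain rfl | hij := eq_or_ne i j
    · rwa [Pi.single_eq_same]
    · simp [Pi.single_eq_of_ne hij]
  · rw [dotProduct_add, dotProduct_single, hrs]

theorem map_dotProduct_heightLT (hP : P ∈ coprimeTuples F ι l) (hln : l ≤ n) :
    (heightLT F ι n).map (dotProductBilin F F P) = degreeLT F (n + l) := by
  refine le_antisymm ?_ fun f hf => exists_dotProduct_eq_of_degree_lt hP hln (mem_degreeLT.1 hf)
  rintro _ ⟨A, hA, rfl⟩
  exact mem_degreeLT.2 (degree_dotProduct_lt hP.2 hA)

theorem ncard_dotProduct_eq_zero_inter_heightLT_mul [Finite F] (hP : P ∈ coprimeTuples F ι l)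
    (hln : l ≤ n) :
    ({A | P ⬝ᵥ A = 0} ∩ heightLT F ι n : Set (ι → F[X])).ncard * Nat.card F ^ l =
      (Nat.card F ^ (Fintype.card ι - 1)) ^ n := by
  have hι : Fintype.card ι ≠ 0 :=
    (Fintype.card_pos_iff.2 (Function.ne_iff.1 hP.1.ne_zero).nonempty).ne'
  have h := natCard_ker_inf_mul_natCard_map (dotProductBilin F F P) (heightLT F ι n)
  rw [map_dotProduct_heightLT hP hln, natCard_degreeLT, natCard_heightLT,
    ← pow_sub_one_mul hι, mul_pow, pow_add, mul_left_comm, mul_comm] at h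
  exact Nat.eq_of_mul_eq_mul_right (pow_pos Nat.card_pos n) h

theorem ncard_dotProduct_eq_zero_inter_coprimeTuples_succ_mul [Finite F]
    (hP : P ∈ coprimeTuples F ι l) {k : ℕ} (hlk : l ≤ k) :
    (({A | P ⬝ᵥ A = 0} ∩ coprimeTuples F ι (k + 1)).ncard : ℤ) * Nat.card F ^ l =
      (Nat.card F ^ (Fintype.card ι - 1)) ^ k * ((Nat.card F ^ (Fintype.card ι - 1) - 1) *
        (Nat.card F ^ (Fintype.card ι - 1) - Nat.card F)) :=
  (isSaturated_dotProduct_eq_zero P).ncard_inter_coprimeTuples_succ_mul fun _ hn =>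
    mod_cast ncard_dotProduct_eq_zero_inter_heightLT_mul hP (hlk.trans hn)

end DotProduct

section Triples

variable {F : Type*} [Field F] {A P Q : Fin 3 → F[X]} {m l : ℕ}

theorem crossProduct_eq_zero_of_dotProduct_eq_zero (hA : A ∈ coprimeTuples F (Fin 3) m)
    (hP : P ∈ coprimeTuples F (Fin 3) l) (hQ : Q ∈ coprimeTuples F (Fin 3) l) (hlm : 2 * l < m)
    (hPA : P ⬝ᵥ A = 0) (hQA : Q ⬝ᵥ A = 0) : P ⨯₃ Q = 0 := by
  have hAPQ : A ⨯₃ (P ⨯₃ Q) = 0 := by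
    rw [cross_cross_eq_smul_sub_smul', dotProduct_comm A, hQA, hPA, zero_smul, zero_smul, sub_zero]
  obtain ⟨t, ht⟩ := hA.1.eq_smul_of_crossProduct_eq_zero hAPQ
  have hheight : t.degree + m < (0 + m : WithBot ℕ) := calc
    t.degree + m = polyHeight (P ⨯₃ Q) := by rw [ht, polyHeight_smul, hA.2]
    _ ≤ (l + l : WithBot ℕ) := by simpa only [hP.2, hQ.2] using polyHeight_crossProduct_le P Q
    _ < (0 + m : WithBot ℕ) := by
      rw [zero_add]
      exact_mod_cast two_mul l ▸ hlm
  have ht0 : t = 0 := degree_eq_bot.1 (Nat.WithBot.lt_zero_iff.1 (lt_of_add_lt_add_right hheight))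
  rw [ht, ht0, zero_smul]

theorem dotProduct_eq_zero_inter_coprimeTuples_eq_range (hA : A ∈ coprimeTuples F (Fin 3) m)
    (hP : P ∈ coprimeTuples F (Fin 3) l) (hlm : 2 * l < m) (hPA : P ⬝ᵥ A = 0) :
    {Q | Q ⬝ᵥ A = 0} ∩ coprimeTuples F (Fin 3) l = Set.range fun c : Fˣ => C (c : F) • P := by
  ext Q
  constructor
  · rintro ⟨hQA, hQ⟩
    obtain ⟨t, rfl⟩ := hP.1.eq_smul_of_crossProduct_eq_zero
      (crossProduct_eq_zero_of_dotProduct_eq_zero hA hP hQ hlm hPA hQA)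
    obtain ⟨_, ⟨c, rfl⟩, rfl⟩ := isUnit_iff.1 (hQ.1 t fun i => dvd_mul_right t (P i))
    exact ⟨c, rfl⟩
  · rintro ⟨c, rfl⟩
    refine ⟨?_, hP.1.units_smul (Units.map C.toMonoidHom c), ?_⟩
    · rw [Set.mem_ofPred_eq, smul_dotProduct, hPA, smul_zero]
    · rw [polyHeight_smul, degree_C c.ne_zero, zero_add, hP.2]

theorem ncard_dotProduct_eq_zero_inter_coprimeTuples (hA : A ∈ coprimeTuples F (Fin 3) m)
    (hP : P ∈ coprimeTuples F (Fin 3) l) (hlm : 2 * l < m) (hPA : P ⬝ᵥ A = 0) :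
    ({Q | Q ⬝ᵥ A = 0} ∩ coprimeTuples F (Fin 3) l).ncard = Nat.card F - 1 := by
  rw [dotProduct_eq_zero_inter_coprimeTuples_eq_range hA hP hlm hPA, ← Nat.card_coe_set_eq,
    ← Nat.card_units]
  exact Nat.card_range_of_injective <|
    (smul_left_injective F[X] hP.1.ne_zero).comp (C_injective.comp Units.val_injective)

theorem ncard_coprimeTuplesWithSolution_mul [Finite F] (hlm : 2 * l < m) :
    (coprimeTuplesWithSolution F (Fin 3) m l).ncard * (Nat.card F - 1) =
      ∑ P ∈ (finite_coprimeTuples (R := F) (ι := Fin 3) l).toFinset,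
        ({A | P ⬝ᵥ A = 0} ∩ coprimeTuples F (Fin 3) m).ncard := by
  classical
  have hS : (coprimeTuplesWithSolution F (Fin 3) m l).Finite := (finite_coprimeTuples m).sep _
  have hT : (coprimeTuples F (Fin 3) l).Finite := finite_coprimeTuples l
  let r (A P : Fin 3 → F[X]) : Prop := P ⬝ᵥ A = 0
  have habove (A) (hA : A ∈ hS.toFinset) :
      (hT.toFinset.bipartiteAbove r A).card = Nat.card F - 1 := by
    obtain ⟨hA, P, hP, hPA⟩ := hS.mem_toFinset.1 hA
    rw [← ncard_dotProduct_eq_zero_inter_coprimeTuples hA hP hlm hPA, ← Set.ncard_coe_finset,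
      Finset.coe_bipartiteAbove, Set.inter_comm]
    congr 1
    exact Set.ext fun Q => and_congr_left' hT.mem_toFinset
  have hbelow (P) (hP : P ∈ hT.toFinset) : (hS.toFinset.bipartiteBelow r P).card =
      ({A | P ⬝ᵥ A = 0} ∩ coprimeTuples F (Fin 3) m).ncard := by
    rw [← Set.ncard_coe_finset, Finset.coe_bipartiteBelow]
    congr 1
    exact Set.ext fun A => (and_congr_left' hS.mem_toFinset).trans
      ⟨fun h => ⟨h.2, h.1.1⟩, fun h => ⟨⟨h.2, P, hT.mem_toFinset.1 hP, h.1⟩, h.1⟩⟩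
  rw [← Finset.sum_congr rfl hbelow,
    ← Finset.sum_card_bipartiteAbove_eq_sum_card_bipartiteBelow, Finset.sum_congr rfl habove,
    Finset.sum_const, smul_eq_mul, Set.ncard_eq_toFinset_card _ hS]

variable (F) [Finite F] {k j : ℕ}

theorem ncard_coprimeTuplesWithSolution_succ_mul (hlk : 2 * l < k + 1) :
    ((coprimeTuplesWithSolution F (Fin 3) (k + 1) l).ncard : ℤ) *
        ((Nat.card F - 1) * Nat.card F ^ l) =
      (coprimeTuples F (Fin 3) l).ncard *
        ((Nat.card F ^ 2) ^ k * ((Nat.card F ^ 2 - 1) * (Nat.card F ^ 2 - Nat.card F))) := by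
  have h := congrArg (Nat.cast (R := ℤ)) (ncard_coprimeTuplesWithSolution_mul (F := F) hlk)
  rw [Nat.cast_mul, Nat.cast_pred Nat.card_pos, Nat.cast_sum] at h
  rw [← mul_assoc, h, Finset.sum_mul, Set.ncard_eq_toFinset_card _ (finite_coprimeTuples l),
    ← nsmul_eq_mul]
  exact Finset.sum_eq_card_nsmul fun P hP =>
    ncard_dotProduct_eq_zero_inter_coprimeTuples_succ_mul ((Set.Finite.mem_toFinset _).1 hP)
      (by lia)

theorem ncard_coprimeTuplesWithSolution_succ_zero (k : ℕ) :
    ((coprimeTuplesWithSolution F (Fin 3) (k + 1) 0).ncard : ℤ) =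
      Nat.card F ^ (2 * k + 1) * ((Nat.card F ^ 3 - 1) * (Nat.card F ^ 2 - 1)) := by
  have hq : (1 : ℤ) < Nat.card F := mod_cast Finite.one_lt_card
  have h := ncard_coprimeTuplesWithSolution_succ_mul F (k := k) (l := 0) (by lia)
  rw [ncard_coprimeTuples_zero, Fintype.card_fin, pow_zero, mul_one] at h
  refine mul_right_cancel₀ (sub_ne_zero.2 hq.ne') (h.trans ?_)
  ring

theorem ncard_coprimeTuplesWithSolution_succ_succ (hjk : 2 * (j + 1) < k + 1) :
    ((coprimeTuplesWithSolution F (Fin 3) (k + 1) (j + 1)).ncard : ℤ) =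
      Nat.card F ^ (2 * (k + j) + 1) * ((Nat.card F ^ 3 - 1) * (Nat.card F ^ 2 - 1) ^ 2) := by
  have hq : (1 : ℤ) < Nat.card F := mod_cast Finite.one_lt_card
  have h := ncard_coprimeTuplesWithSolution_succ_mul F hjk
  rw [ncard_coprimeTuples_succ, Fintype.card_fin] at h
  refine mul_right_cancel₀ (mul_ne_zero (sub_ne_zero.2 hq.ne')
    (pow_ne_zero (j + 1) (zero_lt_one.trans hq).ne')) (h.trans ?_)
  ring

end Triples

/-- `|S(m,l)|` for `m > 2l ≥ 0`: the number of coprime triples `(A₁, A₂, A₃)` of polynomials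
over `𝔽_q` with maximal degree `m` such that `x₁A₁ + x₂A₂ + x₃A₃ = 0` has a solution of height
`l` (i.e. a coprime polynomial solution of maximal degree `l`) is
`q^{2(m+l)-3}(q³-1)(q²-1)²` if `l ≥ 1`, and `q^{2m-1}(q³-1)(q²-1)` if `l = 0`. -/
theorem card_Sml {F : Type*} [Field F] [Fintype F] (q m l : ℕ)
    (hq : Fintype.card F = q) (hml : 2 * l < m) :
    Nat.card {A : Fin 3 → Polynomial F //
      (∀ d : Polynomial F, (∀ i, d ∣ A i) → IsUnit d) ∧
      (Finset.univ.sup fun i => (A i).degree) = (m : WithBot ℕ) ∧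
      ∃ P : Fin 3 → Polynomial F,
        (∀ d : Polynomial F, (∀ i, d ∣ P i) → IsUnit d) ∧
        (Finset.univ.sup fun i => (P i).degree) = (l : WithBot ℕ) ∧
        ∑ i, P i * A i = 0} =
      if l = 0 then q ^ (2 * m - 1) * ((q ^ 3 - 1) * (q ^ 2 - 1))
      else q ^ (2 * (m + l) - 3) * ((q ^ 3 - 1) * (q ^ 2 - 1) ^ 2) := by
  obtain ⟨k, rfl⟩ : ∃ k, m = k + 1 := Nat.exists_eq_succ_of_ne_zero (Nat.ne_zero_of_lt hml)
  obtain rfl : Nat.card F = q := Nat.card_eq_fintype_card.trans hq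
  have hpow (i : ℕ) : 1 ≤ Nat.card F ^ i := Nat.one_le_pow _ _ Nat.card_pos
  trans (coprimeTuplesWithSolution F (Fin 3) (k + 1) l).ncard
  · exact Nat.card_congr <| Equiv.subtypeEquivRight fun A => by
      simp only [coprimeTuplesWithSolution, coprimeTuples, IsCoprimeTuple, polyHeight, dotProduct,
        Set.mem_ofPred_eq, and_assoc]
  · obtain _ | j := l
    · rw [if_pos rfl]
      zify [hpow]
      exact ncard_coprimeTuplesWithSolution_succ_zero F k
    · rw [if_neg j.succ_ne_zero, show 2 * (k + 1 + (j + 1)) - 3 = 2 * (k + j) + 1 by lia]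
      zify [hpow]
      exact ncard_coprimeTuplesWithSolution_succ_succ F hml
end

section
/- Let q be a prime power and m = 2l > 0. Then the number of coprime triples (A_1,A_2,A_3) of polynomials with max degree m whose orthogonal equation x_1A_1 + x_2A_2 + x_3A_3 = 0 has a solution of height l satisfies |S(m,l)| = |S(m)|·(q-1)/q. -/
open Polynomial

/-- `S(m)`: coprime triples of polynomials with maximal degree `m`. -/
def Smax (F : Type*) [Field F] (m : ℕ) : Set (Fin 3 → Polynomial F) :=
  {A | (∀ d : Polynomial F, (∀ i, d ∣ A i) → IsUnit d) ∧
    (Finset.univ.sup fun i => (A i).degree) = (m : WithBot ℕ)}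

/-- `S(m,l)`: triples in `S(m)` such that `x₁A₁ + x₂A₂ + x₃A₃ = 0` has a solution of
height exactly `l`. -/
def Sml (F : Type*) [Field F] (m l : ℕ) : Set (Fin 3 → Polynomial F) :=
  {A ∈ Smax F m | ∃ P : Fin 3 → Polynomial F,
    (∀ d : Polynomial F, (∀ i, d ∣ P i) → IsUnit d) ∧
    (Finset.univ.sup fun i => (P i).degree) = (l : WithBot ℕ) ∧
    ∑ i, P i * A i = 0}

/-!
Call a vector of polynomials primitive if its entries have no common factor. If `A` is a primitive
triple of height `2l`, counting dimensions gives a primitive vector of height at most `l`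
orthogonal to `A`. Two primitive vectors orthogonal to `A` whose heights add up to less than `2l`
have a cross product that is a multiple of `A` of height less than that of `A`, hence zero, and so
differ by a unit. Thus `A` lies in `S(2l, l)` or is orthogonal to exactly `q - 1` primitive vectors
of height less than `l`, and the exceptional `A` are counted by counting the pairs `(P, A)` with
`P` of height less than `l`. The number of `A` orthogonal to a given `P` of height `n` is
proportional to `q⁻ⁿ`, and the resulting sum `∑ n < l, q⁻ⁿ |S(n)|` is, up to a power of `q`, the
number of all vectors of height `l - 1`: such a vector is uniquely a monic polynomial of degree
`l - 1 - n` times a primitive vector of height `n`.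
-/

namespace PolyVec

open Matrix

section Primitive

variable {R ι : Type*} [CommRing R]

/-- Primitive (coprime) vectors: every common divisor of the entries is a unit. -/
def Primitive (v : ι → R) : Prop :=
  ∀ d : R, (∀ i, d ∣ v i) → IsUnit d

theorem Primitive.ne_zero [Nontrivial R] {v : ι → R} (hv : Primitive v) : v ≠ 0 := by
  rintro rfl
  exact not_isUnit_zero (hv 0 fun _ => dvd_zero _)

theorem primitive_of_dotProduct_eq_one [Fintype ι] {a v : ι → R} (h : a ⬝ᵥ v = 1) : Primitive v :=
  fun _ hd => isUnit_of_dvd_one (h ▸ Finset.dvd_sum fun i _ => (hd i).mul_left (a i))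

variable [IsPrincipalIdealRing R]

theorem exists_eq_smul_and_dotProduct_eq [Fintype ι] (v : ι → R) :
    ∃ (g : R) (w a : ι → R), v = g • w ∧ a ⬝ᵥ v = g := by
  obtain ⟨g, hg⟩ := IsPrincipalIdealRing.principal (Ideal.span (Set.range v))
  have hg_dvd (i : ι) : g ∣ v i :=
    Ideal.mem_span_singleton.1 (hg.le (Ideal.subset_span (Set.mem_range_self i)))
  choose w hw using hg_dvd
  obtain ⟨a, ha⟩ :=
    Ideal.mem_span_range_iff_exists_fun.1 (hg.ge (Ideal.mem_span_singleton_self g))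
  exact ⟨g, w, a, funext hw, ha⟩

theorem Primitive.exists_dotProduct_eq_one [Fintype ι] {v : ι → R} (hv : Primitive v) :
    ∃ a : ι → R, a ⬝ᵥ v = 1 := by
  obtain ⟨g, w, a, hvw, ha⟩ := exists_eq_smul_and_dotProduct_eq v
  obtain ⟨u, rfl⟩ := hv g fun i => ⟨w i, congrFun hvw i⟩
  exact ⟨(↑u⁻¹ : R) • a, by rw [smul_dotProduct, ha, smul_eq_mul, u.inv_mul]⟩

theorem Primitive.dvd_of_smul_eq_smul [Finite ι] {g g' : R} {w w' : ι → R} (hw : Primitive w)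
    (h : g • w = g' • w') : g' ∣ g := by
  cases nonempty_fintype ι
  obtain ⟨a, ha⟩ := hw.exists_dotProduct_eq_one
  refine ⟨a ⬝ᵥ w', ?_⟩
  calc g = a ⬝ᵥ g • w := by rw [dotProduct_smul, ha, smul_eq_mul, mul_one]
    _ = g' * (a ⬝ᵥ w') := by rw [h, dotProduct_smul, smul_eq_mul]

theorem Primitive.exists_eq_smul_of_cross_eq_zero {v w : Fin 3 → R} (hv : Primitive v)
    (h : v ⨯₃ w = 0) : ∃ t : R, w = t • v := by
  obtain ⟨a, ha⟩ := hv.exists_dotProduct_eq_one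
  refine ⟨a ⬝ᵥ w, ?_⟩
  have h_triple := cross_cross_eq_smul_sub_smul' a v w
  rw [h, map_zero, dotProduct_comm v a, ha, one_smul] at h_triple
  exact (sub_eq_zero.1 h_triple.symm).symm

end Primitive

variable {F ι : Type*} [Field F]

/-- Submodules closed under dividing a vector by a nonzero polynomial, so that a vector belongs to
the submodule as soon as one of its nonzero multiples does. -/
def IsSaturated (M : Submodule F[X] (ι → F[X])) : Prop :=
  ∀ ⦃g : F[X]⦄ ⦃v : ι → F[X]⦄, g ≠ 0 → g • v ∈ M → v ∈ M

theorem isSaturated_top : IsSaturated (⊤ : Submodule F[X] (ι → F[X])) :=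
  fun _ _ _ _ => Submodule.mem_top

theorem exists_monic_smul_primitive [Finite ι] {v : ι → F[X]} (hv : v ≠ 0) :
    ∃ (g : F[X]) (w : ι → F[X]), g.Monic ∧ Primitive w ∧ v = g • w := by
  cases nonempty_fintype ι
  obtain ⟨g, w, a, hvw, ha⟩ := exists_eq_smul_and_dotProduct_eq v
  have hg : g ≠ 0 := by
    rintro rfl
    exact hv (hvw.trans (zero_smul _ w))
  have h_lead : C g.leadingCoeff⁻¹ * C g.leadingCoeff = 1 := by
    rw [← C_mul, inv_mul_cancel₀ (leadingCoeff_ne_zero.2 hg), C_1]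
  have h_bezout : a ⬝ᵥ w = 1 := by
    rw [hvw, dotProduct_smul, smul_eq_mul] at ha
    exact (mul_eq_left₀ hg).1 ha
  refine ⟨g * C g.leadingCoeff⁻¹, C g.leadingCoeff • w, monic_mul_leadingCoeff_inv hg,
    primitive_of_dotProduct_eq_one (a := C g.leadingCoeff⁻¹ • a) ?_, ?_⟩
  · rw [dotProduct_smul, smul_dotProduct, h_bezout, smul_eq_mul, smul_eq_mul, mul_one, mul_comm,
      h_lead]
  · rw [smul_smul, mul_assoc, h_lead, mul_one, hvw]

theorem eq_and_eq_of_monic_smul_primitive_eq [Finite ι] {g g' : F[X]} {w w' : ι → F[X]}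
    (hg : g.Monic) (hg' : g'.Monic) (hw : Primitive w) (hw' : Primitive w')
    (h : g • w = g' • w') : g = g' ∧ w = w' := by
  obtain rfl : g = g' := eq_of_monic_of_associated hg hg' <|
    associated_of_dvd_dvd (hw'.dvd_of_smul_eq_smul h.symm) (hw.dvd_of_smul_eq_smul h)
  exact ⟨rfl, smul_right_injective _ hg.ne_zero h⟩

section Height

variable [Fintype ι]

/-- The height of a vector of polynomials: the maximal degree of its entries. It is `⊥` exactly for
the zero vector. -/
def height (v : ι → F[X]) : WithBot ℕ :=
  Finset.univ.sup fun i => (v i).degree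

theorem degree_le_height (v : ι → F[X]) (i : ι) : (v i).degree ≤ height v :=
  Finset.le_sup (f := fun i => (v i).degree) (Finset.mem_univ i)

theorem height_lt_natCast_iff {v : ι → F[X]} {n : ℕ} :
    height v < n ↔ ∀ i, (v i).degree < n := by
  simp [height]

theorem exists_height_eq_natCast {v : ι → F[X]} (hv : v ≠ 0) : ∃ n : ℕ, height v = n := by
  have h : height v ≠ ⊥ := by simpa [height, Finset.sup_eq_bot_iff, funext_iff] using hv
  obtain ⟨n, hn⟩ := WithBot.ne_bot_iff_exists.1 h
  exact ⟨n, hn.symm⟩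

theorem ne_zero_of_height_eq_natCast {v : ι → F[X]} {n : ℕ} (hv : height v = n) : v ≠ 0 := by
  rintro rfl
  simp [height] at hv

theorem exists_degree_eq_of_height_eq_natCast {v : ι → F[X]} {n : ℕ} (hv : height v = n) :
    ∃ i, (v i).degree = n := by
  obtain ⟨i₀, -⟩ := Function.ne_iff.1 (ne_zero_of_height_eq_natCast hv)
  obtain ⟨i, -, hi⟩ := Finset.exists_mem_eq_sup Finset.univ ⟨i₀, Finset.mem_univ _⟩
    fun i => (v i).degree
  exact ⟨i, hi.symm.trans hv⟩

theorem height_smul (g : F[X]) (v : ι → F[X]) : height (g • v) = g.degree + height v := by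
  simp only [height, Pi.smul_apply, smul_eq_mul, degree_mul]
  exact (Finset.apply_sup_eq_sup_comp (g.degree + ·)
    (fun x y => (max_add_add_left g.degree x y).symm) (WithBot.add_bot _)).symm

theorem height_units_smul (u : Fˣ) (v : ι → F[X]) : height (C (u : F) • v) = height v := by
  rw [height_smul, degree_C u.ne_zero, zero_add]

theorem degree_dotProduct_le (v w : ι → F[X]) : (v ⬝ᵥ w).degree ≤ height v + height w :=
  (degree_sum_le _ _).trans <| Finset.sup_le fun i _ =>
    (degree_mul_le _ _).trans (add_le_add (degree_le_height v i) (degree_le_height w i))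

theorem height_cross_le (v w : Fin 3 → F[X]) : height (v ⨯₃ w) ≤ height v + height w := by
  have h_mul (i j : Fin 3) : (v i * w j).degree ≤ height v + height w :=
    (degree_mul_le _ _).trans (add_le_add (degree_le_height v i) (degree_le_height w j))
  have h_sub (i j : Fin 3) : (v i * w j - v j * w i).degree ≤ height v + height w :=
    (degree_sub_le _ _).trans (max_le (h_mul i j) (h_mul j i))
  refine Finset.sup_le fun i _ => ?_
  fin_cases i
  exacts [h_sub 1 2, h_sub 2 0, h_sub 0 1]

end Height

section Orth

variable [Fintype ι]

/-- The orthogonal complement of a vector `v`. -/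
noncomputable def orth (v : ι → F[X]) : Submodule F[X] (ι → F[X]) :=
  LinearMap.ker (dotProductBilin F[X] F[X] v)

theorem mem_orth {v w : ι → F[X]} : w ∈ orth v ↔ v ⬝ᵥ w = 0 := Iff.rfl

theorem mem_orth_comm {v w : ι → F[X]} : w ∈ orth v ↔ v ∈ orth w := by
  rw [mem_orth, mem_orth, dotProduct_comm]

theorem isSaturated_orth (v : ι → F[X]) : IsSaturated (orth v) := fun g w hg h => by
  rw [mem_orth, dotProduct_smul, smul_eq_mul] at h
  exact (mul_eq_zero.1 h).resolve_left hg

theorem exists_units_smul_eq_of_height_add_lt {A P Q : Fin 3 → F[X]} (hA : Primitive A)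
    (hP : Primitive P) (hQ : Primitive Q) (hPA : P ∈ orth A) (hQA : Q ∈ orth A)
    (h : height P + height Q < height A) : ∃ u : Fˣ, C (u : F) • P = Q := by
  have h_cross_cross : A ⨯₃ (P ⨯₃ Q) = 0 := by
    rw [cross_cross_eq_smul_sub_smul', mem_orth.1 hQA, mem_orth.1 (mem_orth_comm.1 hPA),
      zero_smul, zero_smul, sub_zero]
  obtain ⟨t, ht⟩ := hA.exists_eq_smul_of_cross_eq_zero h_cross_cross
  have ht_zero : t = 0 := by
    by_contra ht_ne
    refine h.not_ge (le_trans ?_ (height_cross_le P Q))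
    rw [ht, height_smul]
    exact le_add_of_nonneg_left (zero_le_degree_iff.2 ht_ne)
  rw [ht_zero, zero_smul] at ht
  obtain ⟨s, rfl⟩ := hP.exists_eq_smul_of_cross_eq_zero ht
  obtain ⟨u, hu, rfl⟩ := isUnit_iff.1 (hQ s fun i => dvd_mul_right s (P i))
  exact ⟨hu.unit, rfl⟩

end Orth

section Minkowski

/-- The `F`-subspace of vectors of height less than `n` in `M`. -/
noncomputable def heightLT (M : Submodule F[X] (ι → F[X])) (n : ℕ) : Submodule F (ι → F[X]) :=
  M.restrictScalars F ⊓ Submodule.pi Set.univ fun _ => degreeLT F n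

theorem heightLT_le_heightLT {M N : Submodule F[X] (ι → F[X])} {m n : ℕ} (hMN : M ≤ N)
    (hmn : m ≤ n) : heightLT M m ≤ heightLT N n :=
  inf_le_inf (fun _ hv => hMN hv) (Submodule.pi_mono fun _ _ => degreeLT_mono hmn)

/-- Vectors of height less than `n` are families of polynomials of degree less than `n`. -/
noncomputable def heightLTTopEquiv (F ι : Type*) [Field F] (n : ℕ) :
    heightLT (⊤ : Submodule F[X] (ι → F[X])) n ≃ₗ[F] (ι → degreeLT F n) where
  toFun v i := ⟨v.1 i, v.2.2 i trivial⟩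
  invFun w := ⟨fun i => w i, trivial, fun i _ => (w i).2⟩
  map_add' _ _ := rfl
  map_smul' _ _ := rfl

instance [Finite ι] (M : Submodule F[X] (ι → F[X])) (n : ℕ) : Module.Finite F (heightLT M n) :=
  have := Module.Finite.equiv (heightLTTopEquiv F ι n).symm
  Submodule.finiteDimensional_of_le (heightLT_le_heightLT le_top le_rfl)

variable [Fintype ι]

theorem mem_heightLT {M : Submodule F[X] (ι → F[X])} {n : ℕ} {v : ι → F[X]} :
    v ∈ heightLT M n ↔ v ∈ M ∧ height v < n := by
  simp [heightLT, height_lt_natCast_iff, mem_degreeLT]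

theorem finrank_degreeLT (F : Type*) [Field F] (n : ℕ) : Module.finrank F (degreeLT F n) = n := by
  rw [(degreeLTEquiv F n).finrank_eq, Module.finrank_fin_fun]

theorem finrank_heightLT_top (F ι : Type*) [Field F] [Fintype ι] (n : ℕ) :
    Module.finrank F (heightLT (⊤ : Submodule F[X] (ι → F[X])) n) = Fintype.card ι * n := by
  simp [(heightLTTopEquiv F ι n).finrank_eq, Module.finrank_pi_fintype, finrank_degreeLT]

theorem finrank_map_dotProduct_add_finrank_heightLT_orth (v : ι → F[X]) (k : ℕ) :
    Module.finrank F ((heightLT ⊤ k).map (dotProductBilin F F v)) +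
      Module.finrank F (heightLT (orth v) k) = Fintype.card ι * k := by
  have h_ker : LinearMap.ker ((dotProductBilin F F v).domRestrict (heightLT ⊤ k)) =
      (heightLT (orth v) k).submoduleOf (heightLT ⊤ k) := by
    ext w
    simp only [LinearMap.mem_ker, LinearMap.domRestrict_apply, dotProductBilin_apply_apply,
      Submodule.submoduleOf, Submodule.mem_comap, Submodule.subtype_apply, mem_heightLT, mem_orth,
      (mem_heightLT.1 w.2).2, and_true]
  rw [← finrank_heightLT_top F ι k, ← LinearMap.range_domRestrict,
    ← (Submodule.submoduleOfEquivOfLe (heightLT_le_heightLT le_top le_rfl)).finrank_eq, ← h_ker]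
  exact LinearMap.finrank_range_add_finrank_ker _

theorem map_dotProduct_heightLT_le {v : ι → F[X]} {n : ℕ} (hv : height v ≤ n) (k : ℕ) :
    (heightLT ⊤ k).map (dotProductBilin F F v) ≤ degreeLT F (n + k) := by
  rintro _ ⟨w, hw, rfl⟩
  rw [mem_degreeLT]
  calc (v ⬝ᵥ w).degree ≤ height v + height w := degree_dotProduct_le v w
    _ ≤ n + height w := by gcongr
    _ < n + k := WithBot.add_lt_add_left (WithBot.natCast_ne_bot n) (mem_heightLT.1 hw).2
    _ = (n + k : ℕ) := by push_cast; rfl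

theorem exists_primitive_mem_orth_of_height_le {A : ι → F[X]} {m l : ℕ} (hA : height A ≤ m)
    (hml : m + (l + 1) < Fintype.card ι * (l + 1)) :
    ∃ P ∈ orth A, Primitive P ∧ ∃ k ≤ l, height P = k := by
  have h_ne_bot : heightLT (orth A) (l + 1) ≠ ⊥ := by
    have h_rank := finrank_map_dotProduct_add_finrank_heightLT_orth A (l + 1)
    have h_le := Submodule.finrank_mono (map_dotProduct_heightLT_le hA (l + 1))
    rw [finrank_degreeLT] at h_le
    rw [← Submodule.one_le_finrank_iff]
    omega
  obtain ⟨v, hv, hv_ne⟩ := Submodule.exists_mem_ne_zero_of_ne_bot h_ne_bot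
  obtain ⟨hvA, hvl⟩ := mem_heightLT.1 hv
  obtain ⟨g, P, hg, hP, rfl⟩ := exists_monic_smul_primitive hv_ne
  obtain ⟨k, hk⟩ := exists_height_eq_natCast hP.ne_zero
  refine ⟨P, isSaturated_orth A hg.ne_zero hvA, hP, k, ?_, hk⟩
  rw [height_smul, hk, degree_eq_natDegree hg.ne_zero] at hvl
  norm_cast at hvl
  omega

/-- A Bézout representation of `f` in terms of `P` is shortened by reducing its coefficients
modulo an entry `P j` of maximal degree and collecting the quotients in the coefficient of `P j`. -/
theorem map_dotProduct_heightLT_eq {P : ι → F[X]} {n k : ℕ} (hP : Primitive P)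
    (hPn : height P = n) (hnk : n ≤ k) :
    (heightLT ⊤ k).map (dotProductBilin F F P) = degreeLT F (n + k) := by
  classical
  refine (map_dotProduct_heightLT_le hPn.le k).antisymm fun f hf => ?_
  obtain ⟨a, ha⟩ := hP.exists_dotProduct_eq_one
  obtain ⟨j, hj⟩ := exists_degree_eq_of_height_eq_natCast hPn
  have hPj : P j ≠ 0 := degree_ne_bot.1 (hj ▸ WithBot.natCast_ne_bot n)
  set r : ι → F[X] := fun i => f * a i % P j
  set c : F[X] := P ⬝ᵥ fun i => f * a i / P j
  have hr : r ∈ heightLT ⊤ k := mem_heightLT.2 ⟨trivial, height_lt_natCast_iff.2 fun i =>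
    (EuclideanDomain.mod_lt _ hPj).trans_le (hj.trans_le (by exact_mod_cast hnk))⟩
  have h_split : P ⬝ᵥ r + P j * c = f := by
    have h_div : f • a = r + P j • fun i => f * a i / P j :=
      funext fun i => (EuclideanDomain.mod_add_div (f * a i) (P j)).symm
    calc P ⬝ᵥ r + P j * c = P ⬝ᵥ f • a := by
          rw [h_div, dotProduct_add, dotProduct_smul, smul_eq_mul]
      _ = f := by rw [dotProduct_smul, dotProduct_comm, ha, smul_eq_mul, mul_one]
  have hc : c.degree < k := by
    have h_mul : P j * c ∈ degreeLT F (n + k) := by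
      rw [eq_sub_of_add_eq' h_split]
      exact Submodule.sub_mem _ hf (map_dotProduct_heightLT_le hPn.le k ⟨r, hr, rfl⟩)
    rw [mem_degreeLT, degree_mul, hj, Nat.cast_add] at h_mul
    exact lt_of_add_lt_add_left h_mul
  refine ⟨r + Pi.single j c, Submodule.add_mem _ hr (mem_heightLT.2 ⟨trivial, ?_⟩), ?_⟩
  · refine height_lt_natCast_iff.2 fun i => ?_
    obtain rfl | hij := eq_or_ne i j
    · rwa [Pi.single_eq_same]
    · rw [Pi.single_eq_of_ne hij, degree_zero]
      exact WithBot.bot_lt_coe k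
  · rw [dotProductBilin_apply_apply, dotProduct_add, dotProduct_single, h_split]

theorem add_finrank_heightLT_orth {P : ι → F[X]} {n k : ℕ} (hP : Primitive P)
    (hPn : height P = n) (hnk : n ≤ k) :
    n + k + Module.finrank F (heightLT (orth P) k) = Fintype.card ι * k := by
  rw [← finrank_map_dotProduct_add_finrank_heightLT_orth P k,
    map_dotProduct_heightLT_eq hP hPn hnk, finrank_degreeLT]

end Minkowski

section Counting

variable [Fintype ι]

/-- The vectors of height `n` in `M`. -/
def heightEq (M : Submodule F[X] (ι → F[X])) (n : ℕ) : Set (ι → F[X]) :=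
  {v | v ∈ M ∧ height v = n}

/-- The primitive vectors of height `n` in `M`. -/
def primitiveHeightEq (M : Submodule F[X] (ι → F[X])) (n : ℕ) : Set (ι → F[X]) :=
  {v | Primitive v ∧ v ∈ heightEq M n}

theorem heightEq_eq_sdiff (M : Submodule F[X] (ι → F[X])) (n : ℕ) :
    heightEq M n = (heightLT M (n + 1) : Set (ι → F[X])) \ heightLT M n := by
  have h_iff (x : WithBot ℕ) : x = n ↔ x < (n + 1 : ℕ) ∧ ¬ x < n := by
    cases x with
    | bot => simp
    | coe a =>
      simp only [Nat.cast_withBot, WithBot.coe_lt_coe, WithBot.coe_inj]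
      omega
  ext v
  simp only [heightEq, Set.mem_ofPred_eq, Set.mem_sdiff, SetLike.mem_coe, mem_heightLT, h_iff]
  tauto

theorem natCard_monic_natDegree_eq (F : Type*) [Field F] (n : ℕ) :
    Nat.card {g : F[X] // g.Monic ∧ g.natDegree = n} = Nat.card F ^ n := by
  rw [Nat.card_congr (monicEquivDegreeLT n), Module.natCard_eq_pow_finrank (K := F),
    finrank_degreeLT]

theorem natCard_heightLT_top (F ι : Type*) [Field F] [Fintype ι] (k : ℕ) :
    Nat.card (heightLT (⊤ : Submodule F[X] (ι → F[X])) k) = Nat.card F ^ (Fintype.card ι * k) := by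
  rw [Module.natCard_eq_pow_finrank (K := F), finrank_heightLT_top]

theorem natCard_heightLT_orth_mul {d n k : ℕ} (hd : Fintype.card ι = d + 1) {P : ι → F[X]}
    (hP : P ∈ primitiveHeightEq ⊤ n) (hnk : n ≤ k) :
    Nat.card (heightLT (orth P) k) * Nat.card F ^ n = Nat.card F ^ (d * k) := by
  have h_rank := add_finrank_heightLT_orth hP.1 hP.2.2 hnk
  rw [Module.natCard_eq_pow_finrank (K := F), ← pow_add]
  congr 1
  rw [hd] at h_rank
  linarith

variable [Finite F]

theorem finite_heightEq (M : Submodule F[X] (ι → F[X])) (n : ℕ) : (heightEq M n).Finite := by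
  have := Module.finite_of_finite F (M := heightLT M (n + 1))
  rw [heightEq_eq_sdiff]
  exact (Set.toFinite _).sdiff

theorem finite_primitiveHeightEq (M : Submodule F[X] (ι → F[X])) (n : ℕ) :
    (primitiveHeightEq M n).Finite :=
  (finite_heightEq M n).subset fun _ hv => hv.2

theorem ncard_heightEq_add_natCard_heightLT (M : Submodule F[X] (ι → F[X])) (n : ℕ) :
    (heightEq M n).ncard + Nat.card (heightLT M n) = Nat.card (heightLT M (n + 1)) := by
  have := Module.finite_of_finite F (M := heightLT M (n + 1))
  rw [heightEq_eq_sdiff]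
  exact Set.ncard_sdiff_add_ncard_of_subset (heightLT_le_heightLT le_rfl n.le_succ)

theorem ncard_heightEq_eq_sum {M : Submodule F[X] (ι → F[X])} (hM : IsSaturated M) (n : ℕ) :
    (heightEq M n).ncard =
      ∑ k ∈ Finset.range (n + 1), Nat.card F ^ (n - k) * (primitiveHeightEq M k).ncard := by
  have h_smul_mem (k : Fin (n + 1)) {g : F[X]} (hg : g.Monic ∧ g.natDegree = n - k)
      {w : ι → F[X]} (hw : w ∈ primitiveHeightEq M k) : g • w ∈ heightEq M n := by
    refine ⟨M.smul_mem g hw.2.1, ?_⟩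
    rw [height_smul, hw.2.2, degree_eq_natDegree hg.1.ne_zero, hg.2, ← Nat.cast_add,
      Nat.sub_add_cancel k.is_le]
  let f : (Σ k : Fin (n + 1),
      {g : F[X] // g.Monic ∧ g.natDegree = n - k} × primitiveHeightEq M k) → heightEq M n :=
    fun x => ⟨x.2.1.1 • x.2.2.1, h_smul_mem x.1 x.2.1.2 x.2.2.2⟩
  have hf_inj : Function.Injective f := by
    rintro ⟨k, ⟨g, hg⟩, w, hw⟩ ⟨k', ⟨g', hg'⟩, w', hw'⟩ h
    obtain ⟨rfl, rfl⟩ := eq_and_eq_of_monic_smul_primitive_eq hg.1 hg'.1 hw.1 hw'.1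
      (congrArg Subtype.val h)
    obtain rfl : k = k' := Fin.ext (by exact_mod_cast hw.2.2.symm.trans hw'.2.2)
    rfl
  have hf_surj : Function.Surjective f := by
    rintro ⟨v, hvM, hvn⟩
    obtain ⟨g, w, hg, hw, rfl⟩ := exists_monic_smul_primitive (ne_zero_of_height_eq_natCast hvn)
    obtain ⟨k, hk⟩ := exists_height_eq_natCast hw.ne_zero
    have h_deg : g.natDegree + k = n := by
      rw [height_smul, hk, degree_eq_natDegree hg.ne_zero] at hvn
      exact_mod_cast hvn
    exact ⟨⟨⟨k, by omega⟩, ⟨g, hg, Nat.eq_sub_of_add_eq h_deg⟩,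
      ⟨w, hw, hM hg.ne_zero hvM, hk⟩⟩, rfl⟩
  have (k : ℕ) : Finite (primitiveHeightEq M k) := (finite_primitiveHeightEq M k).to_subtype
  have (k : ℕ) : Finite {g : F[X] // g.Monic ∧ g.natDegree = k} :=
    have := Module.finite_of_finite F (M := degreeLT F k)
    Finite.of_equiv _ (monicEquivDegreeLT k).symm
  rw [← Nat.card_coe_set_eq, ← Nat.card_congr (Equiv.ofBijective f ⟨hf_inj, hf_surj⟩),
    Nat.card_sigma, Finset.sum_range]
  simp only [Nat.card_prod, natCard_monic_natDegree_eq, Nat.card_coe_set_eq]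

theorem ncard_heightEq_succ {M : Submodule F[X] (ι → F[X])} (hM : IsSaturated M) (n : ℕ) :
    (heightEq M (n + 1)).ncard =
      Nat.card F * (heightEq M n).ncard + (primitiveHeightEq M (n + 1)).ncard := by
  rw [ncard_heightEq_eq_sum hM, ncard_heightEq_eq_sum hM, Finset.sum_range_succ, Nat.sub_self,
    pow_zero, one_mul, Finset.mul_sum]
  congr 1
  refine Finset.sum_congr rfl fun k hk => ?_
  rw [Nat.succ_sub (Finset.mem_range_succ_iff.1 hk), pow_succ', mul_assoc]

theorem ncard_heightEq_mul {M : Submodule F[X] (ι → F[X])} {c e n : ℕ}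
    (h : ∀ k ≥ n, Nat.card (heightLT M k) * c = Nat.card F ^ (e * k)) :
    ((heightEq M n).ncard * c : ℤ) = (Nat.card F : ℤ) ^ (e * n) * ((Nat.card F : ℤ) ^ e - 1) := by
  have h_diff := ncard_heightEq_add_natCard_heightLT M n
  have h₀ := h n le_rfl
  have h₁ := h (n + 1) n.le_succ
  zify at h_diff h₀ h₁
  linear_combination (c : ℤ) * h_diff - h₀ + h₁

theorem ncard_primitiveHeightEq_succ_mul {M : Submodule F[X] (ι → F[X])} (hM : IsSaturated M)
    {c e n : ℕ} (h : ∀ k ≥ n, Nat.card (heightLT M k) * c = Nat.card F ^ ((e + 1) * k)) :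
    ((primitiveHeightEq M (n + 1)).ncard * c : ℤ) = (Nat.card F : ℤ) ^ ((e + 1) * n + 1) *
      ((Nat.card F : ℤ) ^ (e + 1) - 1) * ((Nat.card F : ℤ) ^ e - 1) := by
  have h_succ := ncard_heightEq_succ hM n
  have h₀ := ncard_heightEq_mul h
  have h₁ := ncard_heightEq_mul (n := n + 1) fun k hk => h k (n.le_succ.trans hk)
  zify at h_succ
  linear_combination h₁ - (Nat.card F : ℤ) * h₀ - (c : ℤ) * h_succ

theorem sum_ncard_primitiveHeightEq_orth_comm (m n : ℕ) :
    ∑ P ∈ (finite_primitiveHeightEq (⊤ : Submodule F[X] (ι → F[X])) n).toFinset,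
        (primitiveHeightEq (orth P) m).ncard =
      ∑ A ∈ (finite_primitiveHeightEq (⊤ : Submodule F[X] (ι → F[X])) m).toFinset,
        (primitiveHeightEq (orth A) n).ncard := by
  classical
  have h_filter (k : ℕ) (v : ι → F[X]) : (primitiveHeightEq (orth v) k).ncard =
      ((finite_primitiveHeightEq ⊤ k).toFinset.filter (v ∈ orth ·)).card := by
    rw [← Set.ncard_coe_finset]
    congr 1
    ext w
    simp only [primitiveHeightEq, heightEq, mem_orth_comm (v := v), Set.mem_ofPred_eq,
      Finset.coe_filter, Set.Finite.mem_toFinset, Submodule.mem_top, true_and]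
    tauto
  simp only [h_filter]
  refine (Finset.sum_card_bipartiteAbove_eq_sum_card_bipartiteBelow fun P A => P ∈ orth A).trans
    (Finset.sum_congr rfl fun A _ => ?_)
  simp only [Finset.bipartiteBelow, mem_orth_comm (v := A)]

theorem ncard_heightEq_top (n : ℕ) :
    ((heightEq (⊤ : Submodule F[X] (ι → F[X])) n).ncard : ℤ) =
      (Nat.card F : ℤ) ^ (Fintype.card ι * n) * ((Nat.card F : ℤ) ^ Fintype.card ι - 1) := by
  simpa using ncard_heightEq_mul (c := 1) fun k (_ : n ≤ k) => by
    rw [mul_one, natCard_heightLT_top]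

theorem ncard_primitiveHeightEq_top_succ {e : ℕ} (hι : Fintype.card ι = e + 1) (n : ℕ) :
    ((primitiveHeightEq (⊤ : Submodule F[X] (ι → F[X])) (n + 1)).ncard : ℤ) =
      (Nat.card F : ℤ) ^ ((e + 1) * n + 1) * ((Nat.card F : ℤ) ^ (e + 1) - 1) *
        ((Nat.card F : ℤ) ^ e - 1) := by
  simpa using ncard_primitiveHeightEq_succ_mul (c := 1) isSaturated_top fun k (_ : n ≤ k) => by
    rw [mul_one, natCard_heightLT_top, hι]

theorem ncard_primitiveHeightEq_orth_succ_mul {e n k : ℕ} (hι : Fintype.card ι = e + 2)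
    {P : ι → F[X]} (hP : P ∈ primitiveHeightEq ⊤ n) (hnk : n ≤ k) :
    ((primitiveHeightEq (orth P) (k + 1)).ncard * Nat.card F ^ n : ℤ) =
      (Nat.card F : ℤ) ^ ((e + 1) * k + 1) * ((Nat.card F : ℤ) ^ (e + 1) - 1) *
        ((Nat.card F : ℤ) ^ e - 1) := by
  exact_mod_cast ncard_primitiveHeightEq_succ_mul (isSaturated_orth P) fun j hkj =>
    natCard_heightLT_orth_mul hι hP (hnk.trans hkj)

theorem pow_mul_sum_sum_ncard_primitiveHeightEq_orth {e j k : ℕ} (hι : Fintype.card ι = e + 2)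
    (hjk : j ≤ k) :
    (Nat.card F : ℤ) ^ j * ∑ n ∈ Finset.range (j + 1),
        ∑ P ∈ (finite_primitiveHeightEq (⊤ : Submodule F[X] (ι → F[X])) n).toFinset,
          ((primitiveHeightEq (orth P) (k + 1)).ncard : ℤ) =
      (Nat.card F : ℤ) ^ ((e + 1) * k + 1) * ((Nat.card F : ℤ) ^ (e + 1) - 1) *
        ((Nat.card F : ℤ) ^ e - 1) * (heightEq (⊤ : Submodule F[X] (ι → F[X])) j).ncard := by
  rw [ncard_heightEq_eq_sum isSaturated_top, Finset.mul_sum, Nat.cast_sum, Finset.mul_sum]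
  refine Finset.sum_congr rfl fun n hn => ?_
  have hnj : n ≤ j := Finset.mem_range_succ_iff.1 hn
  rw [Set.ncard_eq_toFinset_card _ (finite_primitiveHeightEq _ n), Finset.mul_sum,
    Finset.card_eq_sum_ones, Nat.cast_mul, Nat.cast_sum, Finset.mul_sum, Finset.mul_sum]
  refine Finset.sum_congr rfl fun P hP => ?_
  have h_orth := ncard_primitiveHeightEq_orth_succ_mul hι
    ((Set.Finite.mem_toFinset _).1 hP) (hnj.trans hjk)
  rw [← h_orth, ← Nat.sub_add_cancel hnj, pow_add, Nat.sub_add_cancel hnj]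
  push_cast
  ring

end Counting

section Triples

theorem Smax_eq_primitiveHeightEq (F : Type*) [Field F] (m : ℕ) :
    Smax F m = primitiveHeightEq ⊤ m :=
  Set.ext fun _ => ⟨fun h => ⟨h.1, trivial, h.2⟩, fun h => ⟨h.1, h.2.2⟩⟩

theorem mem_Sml_iff {A : Fin 3 → F[X]} {m l : ℕ} :
    A ∈ Sml F m l ↔ A ∈ Smax F m ∧ (primitiveHeightEq (orth A) l).Nonempty :=
  and_congr_right fun _ => exists_congr fun _ =>
    ⟨fun h => ⟨h.1, mem_orth_comm.1 h.2.2, h.2.1⟩, fun h => ⟨h.1, h.2.2, mem_orth_comm.1 h.2.1⟩⟩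

theorem units_smul_mem_primitiveHeightEq [Fintype ι] {M : Submodule F[X] (ι → F[X])} {k : ℕ}
    {P : ι → F[X]} (hP : P ∈ primitiveHeightEq M k) (u : Fˣ) :
    C (u : F) • P ∈ primitiveHeightEq M k :=
  ⟨fun d hd => hP.1 d fun i => (isUnit_C.2 u.isUnit).dvd_mul_left.1 (hd i),
    M.smul_mem _ hP.2.1, (height_units_smul u P).trans hP.2.2⟩

theorem exists_units_smul_eq_of_add_lt {A P Q : Fin 3 → F[X]} {m k n : ℕ}
    (hA : A ∈ Smax F m) (hP : P ∈ primitiveHeightEq (orth A) k)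
    (hQ : Q ∈ primitiveHeightEq (orth A) n) (h : k + n < m) : ∃ u : Fˣ, C (u : F) • P = Q :=
  exists_units_smul_eq_of_height_add_lt hA.1 hP.1 hQ.1 hP.2.1 hQ.2.1 <| by
    rw [hP.2.2, hQ.2.2]
    exact (by exact_mod_cast h : (k + n : WithBot ℕ) < m).trans_eq hA.2.symm

theorem ncard_primitiveHeightEq_orth {A P : Fin 3 → F[X]} {m k : ℕ} (hA : A ∈ Smax F m)
    (hP : P ∈ primitiveHeightEq (orth A) k) (h : k + k < m) :
    (primitiveHeightEq (orth A) k).ncard = Nat.card F - 1 := by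
  have h_range : primitiveHeightEq (orth A) k = Set.range fun u : Fˣ => C (u : F) • P :=
    Set.Subset.antisymm (fun _ hQ => exists_units_smul_eq_of_add_lt hA hP hQ h)
      (Set.range_subset_iff.2 (units_smul_mem_primitiveHeightEq hP))
  have h_inj : Function.Injective fun u : Fˣ => C (u : F) • P := fun u v huv =>
    Units.ext (C_injective (smul_left_injective _ hP.1.ne_zero huv))
  rw [h_range, Set.ncard_range_of_injective h_inj, Nat.card_units]

theorem ncard_primitiveHeightEq_orth_eq_zero {A P : Fin 3 → F[X]} {m k n : ℕ} (hA : A ∈ Smax F m)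
    (hP : P ∈ primitiveHeightEq (orth A) k) (h : k + n < m) (hnk : n ≠ k) :
    (primitiveHeightEq (orth A) n).ncard = 0 := by
  have h_empty : primitiveHeightEq (orth A) n = ∅ := Set.eq_empty_of_forall_notMem fun Q hQ => by
    obtain ⟨u, rfl⟩ := exists_units_smul_eq_of_add_lt hA hP hQ h
    have h_height := hQ.2.2
    rw [height_units_smul, hP.2.2, Nat.cast_inj] at h_height
    exact hnk h_height.symm
  rw [h_empty, Set.ncard_empty]

theorem sum_ncard_primitiveHeightEq_orth_of_mem_Sml {A : Fin 3 → F[X]} {l : ℕ}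
    (hA : A ∈ Sml F (2 * l) l) :
    ∑ n ∈ Finset.range l, (primitiveHeightEq (orth A) n).ncard = 0 := by
  obtain ⟨hA, P, hP⟩ := mem_Sml_iff.1 hA
  refine Finset.sum_eq_zero fun n hn => ?_
  have hnl := Finset.mem_range.1 hn
  exact ncard_primitiveHeightEq_orth_eq_zero hA hP (by omega) hnl.ne

theorem sum_ncard_primitiveHeightEq_orth_of_notMem_Sml {A : Fin 3 → F[X]} {l : ℕ}
    (hA : A ∈ Smax F (2 * l)) (hAl : A ∉ Sml F (2 * l) l) :
    ∑ n ∈ Finset.range l, (primitiveHeightEq (orth A) n).ncard = Nat.card F - 1 := by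
  obtain ⟨P, hPA, hP, k, hkl, hPk⟩ := exists_primitive_mem_orth_of_height_le (l := l) hA.2.le
    (by rw [Fintype.card_fin]; omega)
  have hP_mem : P ∈ primitiveHeightEq (orth A) k := ⟨hP, hPA, hPk⟩
  have hk : k < l := hkl.lt_of_ne <| by
    rintro rfl
    exact hAl (mem_Sml_iff.2 ⟨hA, P, hP_mem⟩)
  rw [Finset.sum_eq_single_of_mem k (Finset.mem_range.2 hk) fun n hn hnk => ?_]
  · exact ncard_primitiveHeightEq_orth hA hP_mem (by omega)
  · have hnl := Finset.mem_range.1 hn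
    exact ncard_primitiveHeightEq_orth_eq_zero hA hP_mem (by omega) hnk

theorem finite_Smax (F : Type*) [Field F] [Finite F] (m : ℕ) : (Smax F m).Finite :=
  Smax_eq_primitiveHeightEq F m ▸ finite_primitiveHeightEq ⊤ m

theorem sum_sum_ncard_primitiveHeightEq_orth_eq (F : Type*) [Field F] [Finite F] (l : ℕ) :
    ∑ n ∈ Finset.range l,
        ∑ P ∈ (finite_primitiveHeightEq (⊤ : Submodule F[X] (Fin 3 → F[X])) n).toFinset,
          (primitiveHeightEq (orth P) (2 * l)).ncard =
      (Smax F (2 * l) \ Sml F (2 * l) l).ncard * (Nat.card F - 1) := by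
  classical
  have h_sum {A : Fin 3 → F[X]} (hA : A ∈ Smax F (2 * l)) :
      ∑ n ∈ Finset.range l, (primitiveHeightEq (orth A) n).ncard =
        if A ∉ Sml F (2 * l) l then Nat.card F - 1 else 0 := by
    split_ifs with hAl
    exacts [sum_ncard_primitiveHeightEq_orth_of_mem_Sml hAl,
      sum_ncard_primitiveHeightEq_orth_of_notMem_Sml hA hAl]
  simp only [sum_ncard_primitiveHeightEq_orth_comm, Smax_eq_primitiveHeightEq] at h_sum ⊢
  rw [Finset.sum_comm, Finset.sum_congr rfl fun A hA => h_sum ((Set.Finite.mem_toFinset _).1 hA),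
    ← Finset.sum_filter, Finset.sum_const, smul_eq_mul, ← Set.ncard_coe_finset]
  congr 2
  ext A
  simp only [Finset.coe_filter, Set.Finite.mem_toFinset, Set.mem_ofPred_eq, Set.mem_sdiff]

theorem natCard_mul_ncard_Smax_sdiff_Sml (F : Type*) [Field F] [Finite F] {l : ℕ} (hl : 0 < l) :
    Nat.card F * (Smax F (2 * l) \ Sml F (2 * l) l).ncard = (Smax F (2 * l)).ncard := by
  obtain ⟨k, rfl⟩ := Nat.exists_eq_add_one.2 hl
  have h_card : 1 < Nat.card F := Finite.one_lt_card
  have h_pairs := sum_sum_ncard_primitiveHeightEq_orth_eq F (k + 1)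
  have h_weighted := pow_mul_sum_sum_ncard_primitiveHeightEq_orth (F := F) (j := k)
    (k := 2 * k + 1) (Fintype.card_fin 3) (by omega)
  have h_Smax := ncard_primitiveHeightEq_top_succ (F := F) (Fintype.card_fin 3) (2 * k + 1)
  rw [← Smax_eq_primitiveHeightEq] at h_Smax
  zify [h_card.le] at h_pairs ⊢
  have h_cancel : (Nat.card F : ℤ) ^ k * (Nat.card F - 1) ≠ 0 :=
    mul_ne_zero (pow_ne_zero _ (by omega)) (by omega)
  refine mul_left_cancel₀ h_cancel ?_
  rw [show 2 * (k + 1) = 2 * k + 1 + 1 by ring] at h_pairs ⊢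
  rw [h_pairs, ncard_heightEq_top, Fintype.card_fin] at h_weighted
  rw [h_Smax]
  linear_combination (Nat.card F : ℤ) * h_weighted

end Triples

end PolyVec

/-- For `m = 2l > 0`, `|S(m,l)| = |S(m)|·(q-1)/q`. -/
theorem card_Sml_boundary {F : Type*} [Field F] [Fintype F] (q m l : ℕ)
    (hq : Fintype.card F = q) (hm : m = 2 * l) (hl : 0 < l) :
    q * Nat.card (Sml F m l) = (q - 1) * Nat.card (Smax F m) := by
  subst hq hm
  have h_sdiff := PolyVec.natCard_mul_ncard_Smax_sdiff_Sml F hl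
  have h_add := Set.ncard_sdiff_add_ncard_of_subset
    (fun _ hA => hA.1 : Sml F (2 * l) l ⊆ Smax F (2 * l)) (PolyVec.finite_Smax F (2 * l))
  rw [← Nat.card_eq_fintype_card, Nat.card_coe_set_eq, Nat.card_coe_set_eq, Nat.sub_one_mul]
  refine Nat.eq_sub_of_add_eq' ?_
  calc (Smax F (2 * l)).ncard + Nat.card F * (Sml F (2 * l) l).ncard
      = Nat.card F * ((Smax F (2 * l) \ Sml F (2 * l) l).ncard + (Sml F (2 * l) l).ncard) := by
        rw [mul_add, h_sdiff]
    _ = Nat.card F * (Smax F (2 * l)).ncard := by rw [h_add]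
end

section
/- Let q be a prime power and g ≥ 1, ε ∈ {1, 2}. The number of monic cubefree polynomials in F_q[X] of degree 2g + ε equals q^{2g+ε}(1 - q^{-2}). -/
/-!
Every monic `f` is uniquely `a ^ k * b` with `a` and `b` monic and `b` free of `k`-th powers. The
factorizations with `a = 1` are the `k`-free polynomials. In every other one `a = c + X * a'` with
`a'` monic, and `(a, b) ↦ (c, (a', b))` is a bijection onto the pairs of a constant and a
factorization of a monic polynomial of degree `k` less. Hence exactly `q * q ^ (n - k)` of the
`q ^ n` monic polynomials of degree `n ≥ k` fail to be `k`-free.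
-/

open Polynomial

section PowerFree

variable {M : Type*}

/-- An element of a monoid is `k`-free if only units have their `k`-th power dividing it, so that
`2`-free means `Squarefree` and `3`-free means cubefree. -/
def PowerFree [Monoid M] (k : ℕ) (r : M) : Prop :=
  ∀ x : M, x ^ k ∣ r → IsUnit x

theorem PowerFree.of_dvd [Monoid M] {k : ℕ} {r s : M} (hs : PowerFree k s) (hrs : r ∣ s) :
    PowerFree k r :=
  fun x hx ↦ hs x (hx.trans hrs)

theorem exists_eq_pow_mul_powerFree [CommMonoidWithZero M] [WfDvdMonoid M] {k : ℕ} (hk : k ≠ 0)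
    {r : M} (hr : r ≠ 0) : ∃ a b : M, PowerFree k b ∧ r = a ^ k * b := by
  induction r using WellFounded.induction (wellFounded_dvdNotUnit (α := M)) with
  | _ r ih =>
    by_cases hfree : PowerFree k r
    · exact ⟨1, r, hfree, by rw [one_pow, one_mul]⟩
    · obtain ⟨x, ⟨s, rfl⟩, hx⟩ : ∃ x, x ^ k ∣ r ∧ ¬IsUnit x := by
        simpa only [PowerFree, not_forall, exists_prop] using hfree
      have hs : s ≠ 0 := right_ne_zero_of_mul hr
      have hxk : ¬IsUnit (x ^ k) := by rwa [isUnit_pow_iff hk]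
      obtain ⟨a, b, hb, rfl⟩ := ih s ⟨hs, x ^ k, hxk, mul_comm _ _⟩ hs
      exact ⟨x * a, b, hb, by rw [mul_pow, mul_assoc]⟩

theorem PowerFree.dvd_of_pow_mul_eq [CommMonoidWithZero M] [GCDMonoid M] {k : ℕ}
    {a a' b b' : M} (hb' : PowerFree k b') (h : a ^ k * b = a' ^ k * b') : a ∣ a' := by
  obtain ⟨u, v, hu, hv, huv⟩ := extract_gcd a a'
  set d := gcd a a'
  obtain hd | hd := eq_or_ne d 0
  · simp [hu, hv, hd]
  have hcop : IsRelPrime (u ^ k) (v ^ k) := (gcd_isUnit_iff_isRelPrime.1 huv).pow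
  have hcancel : u ^ k * b = v ^ k * b' := by
    apply mul_left_cancel₀ (pow_ne_zero k hd)
    rw [← mul_assoc, ← mul_assoc, ← mul_pow, ← mul_pow, ← hu, ← hv, h]
  have hunit : IsUnit u := hb' u (hcop.dvd_of_dvd_mul_left ⟨b, hcancel.symm⟩)
  rw [hu, hv]
  exact mul_dvd_mul_left d hunit.dvd

end PowerFree

section Monic

variable {R : Type*}

theorem monic_mul_X_add_C [Semiring R] {a : R[X]} (ha : a.Monic) (c : R) :
    (a * X + C c).Monic := by
  nontriviality R
  refine (ha.mul monic_X).add_of_left (degree_C_le.trans_lt ?_)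
  rw [← natDegree_pos_iff_degree_pos, natDegree_mul_X ha.ne_zero]
  exact Nat.succ_pos _

theorem natDegree_divX_add_one [Semiring R] {a : R[X]} (ha : a.Monic) (ha1 : a ≠ 1) :
    a.divX.natDegree + 1 = a.natDegree := by
  rw [natDegree_divX_eq_natDegree_tsub_one,
    Nat.sub_add_cancel (Nat.one_le_iff_ne_zero.2 (mt ha.natDegree_eq_zero.1 ha1))]

theorem monic_divX [Semiring R] {a : R[X]} (ha : a.Monic) (ha1 : a ≠ 1) : a.divX.Monic := by
  rw [Monic, leadingCoeff, coeff_divX, natDegree_divX_add_one ha ha1]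
  exact ha

theorem divX_mul_X_add_C [Semiring R] (a : R[X]) (c : R) : (a * X + C c).divX = a := by
  ext n
  simp [coeff_divX, coeff_C_succ]

theorem finite_monic_natDegree_eq [Ring R] [Nontrivial R] [Finite R] (n : ℕ) :
    Finite {f : R[X] // f.Monic ∧ f.natDegree = n} :=
  .of_equiv _ ((monicEquivDegreeLT n).trans (degreeLTEquiv R n).toEquiv).symm

theorem card_monic_natDegree_eq_s13 [Ring R] [Nontrivial R] (n : ℕ) :
    Nat.card {f : R[X] // f.Monic ∧ f.natDegree = n} = Nat.card R ^ n := by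
  rw [Nat.card_congr ((monicEquivDegreeLT n).trans (degreeLTEquiv R n).toEquiv), Nat.card_fun,
    Nat.card_fin]

end Monic

/-- The factorizations `a ^ k * b` of degree `n` in `R[X]` with `a` monic and `b` monic and
`k`-free, encoded as pairs `(a, b)`. -/
def PowerFreeFactorization (R : Type*) [CommSemiring R] (k n : ℕ) : Type _ :=
  {x : R[X] × R[X] // x.1.Monic ∧ x.2.Monic ∧ PowerFree k x.2 ∧
    k * x.1.natDegree + x.2.natDegree = n}

namespace PowerFreeFactorization

section CommSemiring

variable {R : Type*} [CommSemiring R] {k n : ℕ}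

/-- The product `a ^ k * b` represented by a factorization `(a, b)`. -/
noncomputable def value (x : PowerFreeFactorization R k n) :
    {f : R[X] // f.Monic ∧ f.natDegree = n} :=
  ⟨x.1.1 ^ k * x.1.2, (x.2.1.pow k).mul x.2.2.1, by
    rw [(x.2.1.pow k).natDegree_mul x.2.2.1, x.2.1.natDegree_pow, x.2.2.2.2]⟩

/-- A factorization with trivial `k`-th power part is a `k`-free polynomial. -/
noncomputable def fstEqOneEquiv :
    {x : PowerFreeFactorization R k n // x.1.1 = 1} ≃
      {f : R[X] // f.Monic ∧ f.natDegree = n ∧ PowerFree k f} where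
  toFun x := ⟨x.1.1.2, x.1.2.2.1, by simpa [x.2] using x.1.2.2.2.2, x.1.2.2.2.1⟩
  invFun f := ⟨⟨(1, f), monic_one, f.2.1, f.2.2.2, by simp [f.2.2.1]⟩, rfl⟩
  left_inv x := Subtype.ext (Subtype.ext (Prod.ext x.2.symm rfl))
  right_inv _ := rfl

/-- Splitting `a` as `c + X * a'` turns a factorization `(a, b)` with `a ≠ 1` into the constant `c`
and the factorization `(a', b)` of smaller degree. -/
noncomputable def fstNeOneEquiv [Nontrivial R] :
    {x : PowerFreeFactorization R k (n + k) // x.1.1 ≠ 1} ≃ R × PowerFreeFactorization R k n where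
  toFun x := (x.1.1.1.coeff 0, ⟨(x.1.1.1.divX, x.1.1.2), monic_divX x.1.2.1 x.2, x.1.2.2.1,
    x.1.2.2.2.1, by
      have hdeg := x.1.2.2.2.2
      rw [← natDegree_divX_add_one x.1.2.1 x.2] at hdeg
      linarith⟩)
  invFun y := ⟨⟨(y.2.1.1 * X + C y.1, y.2.1.2), monic_mul_X_add_C y.2.2.1 y.1, y.2.2.2.1,
    y.2.2.2.2.1, by
      have hdeg := y.2.2.2.2.2
      rw [natDegree_add_C, natDegree_mul_X y.2.2.1.ne_zero]
      linarith⟩, by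
    intro h
    have hdeg := congrArg natDegree h
    rw [natDegree_add_C, natDegree_mul_X y.2.2.1.ne_zero, natDegree_one] at hdeg
    exact Nat.succ_ne_zero _ hdeg⟩
  left_inv x := Subtype.ext (Subtype.ext (Prod.ext (divX_mul_X_add _) rfl))
  right_inv y := Prod.ext (by simp) (Subtype.ext (Prod.ext (divX_mul_X_add_C _ _) rfl))

end CommSemiring

section Field

variable {F : Type*} [Field F] {k n : ℕ}

theorem value_injective : Function.Injective (value : PowerFreeFactorization F k n → _) := by
  let _ : GCDMonoid F[X] := UniqueFactorizationMonoid.toGCDMonoid F[X]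
  rintro ⟨⟨a, b⟩, ha, hb, hbfree, _⟩ ⟨⟨a', b'⟩, ha', hb', hbfree', _⟩ h
  have hprod : a ^ k * b = a' ^ k * b' := congrArg Subtype.val h
  obtain rfl : a = a' := eq_of_monic_of_associated ha ha' <| associated_of_dvd_dvd
    (hbfree'.dvd_of_pow_mul_eq hprod) (hbfree.dvd_of_pow_mul_eq hprod.symm)
  obtain rfl : b = b' := mul_left_cancel₀ (pow_ne_zero k ha.ne_zero) hprod
  rfl

theorem value_surjective (hk : k ≠ 0) :
    Function.Surjective (value : PowerFreeFactorization F k n → _) := by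
  classical
  rintro ⟨f, hf, rfl⟩
  obtain ⟨a, b, hb, hfab⟩ := exists_eq_pow_mul_powerFree hk hf.ne_zero
  have ha : a ≠ 0 := by
    rintro rfl
    exact hf.ne_zero (by rw [hfab, zero_pow hk, zero_mul])
  have ha_monic : (normalize a).Monic := monic_normalize ha
  obtain ⟨b', hfab'⟩ : normalize a ^ k ∣ f :=
    (pow_dvd_pow_of_dvd (normalize_associated a).dvd k).trans (Dvd.intro b hfab.symm)
  have hb'_monic : b'.Monic := (ha_monic.pow k).of_mul_monic_left (hfab' ▸ hf)
  have hb'b : b' ∣ b := by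
    rw [← mul_dvd_mul_iff_left (pow_ne_zero k ha), ← hfab, hfab']
    exact mul_dvd_mul_right (pow_dvd_pow_of_dvd (associated_normalize a).dvd k) b'
  refine ⟨⟨(normalize a, b'), ha_monic, hb'_monic, hb.of_dvd hb'b, ?_⟩, Subtype.ext hfab'.symm⟩
  rw [hfab', (ha_monic.pow k).natDegree_mul hb'_monic, ha_monic.natDegree_pow]

theorem value_bijective (hk : k ≠ 0) :
    Function.Bijective (value : PowerFreeFactorization F k n → _) :=
  ⟨value_injective, value_surjective hk⟩

theorem card_eq (hk : k ≠ 0) : Nat.card (PowerFreeFactorization F k n) = Nat.card F ^ n := by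
  rw [Nat.card_eq_of_bijective _ (value_bijective hk), card_monic_natDegree_eq_s13]

instance [Finite F] : Finite (PowerFreeFactorization F k n) :=
  have := finite_monic_natDegree_eq (R := F) n
  .of_injective _ value_injective

end Field

end PowerFreeFactorization

section Field

variable {F : Type*} [Field F]

theorem powerFree_iff_forall_degree_pos {k : ℕ} (hk : k ≠ 0) {f : F[X]} (hf : f ≠ 0) :
    PowerFree k f ↔ ∀ p : F[X], 0 < p.degree → ¬p ^ k ∣ f := by
  refine ⟨fun h p hp hpf ↦ not_isUnit_of_degree_pos p hp (h p hpf), fun h p hpf ↦ ?_⟩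
  have hp : p ≠ 0 := by
    rintro rfl
    exact hf (zero_dvd_iff.1 (by rwa [zero_pow hk] at hpf))
  by_contra hunit
  exact h p (degree_pos_of_ne_zero_of_nonunit hp hunit) hpf

theorem card_monic_powerFree_add [Finite F] {k : ℕ} (hk : k ≠ 0) (n : ℕ) :
    Nat.card {f : F[X] // f.Monic ∧ f.natDegree = n + k ∧ PowerFree k f} + Nat.card F ^ (n + 1) =
      Nat.card F ^ (n + k) := by
  classical
  rw [← PowerFreeFactorization.card_eq (F := F) (n := n + k) hk,
    ← Nat.card_congr (Equiv.sumCompl fun x : PowerFreeFactorization F k (n + k) ↦ x.1.1 = 1),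
    Nat.card_sum, Nat.card_congr PowerFreeFactorization.fstEqOneEquiv,
    Nat.card_congr PowerFreeFactorization.fstNeOneEquiv, Nat.card_prod,
    PowerFreeFactorization.card_eq hk, pow_succ']

end Field

theorem card_monic_cubefree_general {F : Type*} [Field F] [Finite F] {k n : ℕ} (hk : k ≠ 0)
    (hkn : k ≤ n) :
    Nat.card {f : F[X] // f.Monic ∧ f.natDegree = n ∧ ∀ p : F[X], 0 < p.degree → ¬p ^ k ∣ f} =
      Nat.card F ^ n - Nat.card F ^ (n - (k - 1)) := by
  obtain ⟨m, rfl⟩ := Nat.exists_eq_add_of_le' hkn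
  rw [← card_monic_powerFree_add hk, show m + k - (k - 1) = m + 1 by lia, Nat.add_sub_cancel]
  refine Nat.card_congr (Equiv.subtypeEquivRight fun f ↦ and_congr_right fun hf ↦ ?_)
  rw [powerFree_iff_forall_degree_pos hk hf.ne_zero]

/-- The number of monic cubefree polynomials of degree `2g + ε` over `𝔽_q` (`g ≥ 1`,
`ε ∈ {1,2}`) equals `q^{2g+ε}(1 - q⁻²) = q^{2g+ε} - q^{2g+ε-2}`. -/
theorem card_monic_cubefree {F : Type*} [Field F] [Fintype F] (q g ε : ℕ)
    (hq : Fintype.card F = q) (hg : 1 ≤ g) (hε : ε = 1 ∨ ε = 2) :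
    Nat.card {f : Polynomial F // f.Monic ∧ f.natDegree = 2 * g + ε ∧
      ∀ p : Polynomial F, 0 < p.degree → ¬ p ^ 3 ∣ f} =
      q ^ (2 * g + ε) - q ^ (2 * g + ε - 2) := by
  subst hq
  simpa only [Nat.card_eq_fintype_card] using
    card_monic_cubefree_general (F := F) three_ne_zero (by omega : 3 ≤ 2 * g + ε)
end
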